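/- For every first-order formula φ in the language of rings with one free variable, there are only finitely many pairs (p, k) with p prime and k ≥ 1 such that the set {x ∈ GaloisField p (2k) : φ is satisfied at x} equals the set {x ∈ GaloisField p (2k) : x^{p^k} = x} (the unique subfield with p^k elements). In particular, for every prime power q outside a finite set, no elementary formula defines F_q inside F_{q^2}. -/

import Mathlib

open FirstOrder

/-- Satisfaction of a ring-language formula at a tuple of a ring `K`, with `K` viewed as a
structure for the language of rings via `compatibleRingOfRing`. -/
def RingFormulaSat {k : ℕ} (φ : Language.ring.Formula (Fin k))
    (K : Type*) [Add K] [Mul K] [Neg K] [One K] [Zero K] (x : Fin k → K) : Prop :=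
  letI := Ring.compatibleRingOfRing K
  φ.Realize x

/-!
If `φ` defines `F_q` inside `F_{q²}` for infinitely many `q`, take a nonprincipal ultraproduct `W`
of algebraic closures of these `F_{q²}`, with the endomorphisms `ρ` and `κ` induced by `x ↦ x ^ q²`
and `x ↦ x ^ q`. Their fixed fields are the ultraproducts of the `F_{q²}` and of the `F_q`, so `φ`
defines the fixed field of `κ` inside that of `ρ`.

A back-and-forth between pairs of embeddings into `W`, commuting with `ρ`, of countable
algebraically closed difference fields shows that ring formulas do not distinguish corresponding
elements of the fixed field of `ρ`. It therefore suffices to match some `c` fixed by `κ` with some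
`d` fixed by `ρ` but not by `κ`. One takes `c` transcendental over the countable base field. What
`ρ` does on finite extensions of the rational function field then has to be realised above a point
of `F_{q²} \ F_q`, for large `q`. Stepanov's method shows that no behaviour of Frobenius on such an
extension accounts for more than its proportional share of the points above `F_{q²}`, up to a
smaller error, so a behaviour that occurred only above `F_q` would leave too few points in all.
-/

namespace Felgner

open Polynomial Filter
open scoped Polynomial.Bivariate

/-! ### Bivariate polynomials -/

/-- The bivariate polynomial `P(x, y)` has degree at most `s` in the inner variable `x`. -/
def InnerDegreeLE {R : Type*} [Semiring R] (s : ℕ) (P : R[X][Y]) : Prop :=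
  ∀ j, (P.coeff j).natDegree ≤ s

namespace InnerDegreeLE

section Semiring

variable {R : Type*} [Semiring R] {s t : ℕ} {P Q : R[X][Y]}

lemma mono (h : InnerDegreeLE s P) (hst : s ≤ t) : InnerDegreeLE t P :=
  fun j => (h j).trans hst

lemma zero : InnerDegreeLE s (0 : R[X][Y]) := fun _ => by simp

lemma sum {ι : Type*} (I : Finset ι) {P : ι → R[X][Y]} (hP : ∀ i ∈ I, InnerDegreeLE s (P i)) :
    InnerDegreeLE s (∑ i ∈ I, P i) := fun j => by
  rw [finsetSum_coeff]
  exact natDegree_sum_le_of_forall_le _ _ fun i hi => hP i hi j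

lemma mul (hP : InnerDegreeLE s P) (hQ : InnerDegreeLE t Q) : InnerDegreeLE (s + t) (P * Q) :=
  fun j => by
    rw [coeff_mul]
    exact natDegree_sum_le_of_forall_le _ _ fun i _ => natDegree_mul_le_of_le (hP _) (hQ _)

lemma C {a : R[X]} (h : a.natDegree ≤ s) : InnerDegreeLE s (C a) := fun j => by
  rw [coeff_C]; split_ifs <;> simp [h]

lemma X_pow (n : ℕ) : InnerDegreeLE s (X ^ n : R[X][Y]) := fun j => by
  rw [coeff_X_pow]; split_ifs <;> simp

lemma pow (hP : InnerDegreeLE s P) (n : ℕ) : InnerDegreeLE (n * s) (P ^ n) := by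
  induction n with
  | zero => simpa using X_pow 0
  | succ n ih => rw [pow_succ, Nat.succ_mul]; exact ih.mul hP

lemma mul_X_pow (hP : InnerDegreeLE s P) (n : ℕ) : InnerDegreeLE s (P * X ^ n) := by
  simpa using hP.mul (X_pow (s := 0) n)

lemma map {S : Type*} [Semiring S] (hP : InnerDegreeLE s P) (f : R →+* S) :
    InnerDegreeLE s (P.map (mapRingHom f)) := fun j => by
  rw [coeff_map]
  exact natDegree_map_le.trans (hP j)

end Semiring

section Ring

variable {R : Type*} [CommRing R] {s c : ℕ} {P Q g : R[X][Y]}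

lemma sub (hP : InnerDegreeLE s P) (hQ : InnerDegreeLE s Q) : InnerDegreeLE s (P - Q) :=
  fun j => by
    rw [coeff_sub]
    exact (natDegree_sub_le_of_le (hP j) (hQ j)).trans (max_self s).le

lemma modByMonic [Nontrivial R] (hP : InnerDegreeLE s P) (hg : g.Monic) (hgc : InnerDegreeLE c g) :
    InnerDegreeLE (s + c * P.natDegree) (P %ₘ g) := by
  induction hn : P.natDegree using Nat.strong_induction_on generalizing P s with
  | _ n ih =>
    subst hn
    rcases lt_or_ge P.degree g.degree with hlt | hge
    · rw [(modByMonic_eq_self_iff hg).2 hlt]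
      exact hP.mono (Nat.le_add_right _ _)
    set T := Polynomial.C P.leadingCoeff * X ^ (P.natDegree - g.natDegree) with hT
    have reduce : P %ₘ g = (P - g * T) %ₘ g := by
      rw [sub_modByMonic, (modByMonic_eq_zero_iff_dvd hg).2 (dvd_mul_right _ _), sub_zero]
    rw [reduce]
    by_cases h0 : P - g * T = 0
    · rw [h0, zero_modByMonic]
      exact zero
    have hP0 : P ≠ 0 := by
      rintro rfl
      simp [hT] at h0
    have hlt : (P - g * T).natDegree < P.natDegree :=
      natDegree_lt_natDegree h0 (div_wf_lemma ⟨hge, hP0⟩ hg)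
    have hs : InnerDegreeLE (s + c) (P - g * T) := by
      refine (hP.mono (Nat.le_add_right _ _)).sub ?_
      rw [add_comm]
      exact hgc.mul ((C (hP _)).mul_X_pow _)
    refine (ih _ hlt hs rfl).mono ?_
    rw [add_assoc, add_comm c, ← Nat.mul_succ]
    gcongr
    exact hlt

end Ring

end InnerDegreeLE

/-- The evaluation `P ↦ P(x, y)` of bivariate polynomials along `f` on the coefficients. -/
noncomputable def bieval {R S : Type*} [CommSemiring R] [CommSemiring S] (f : R →+* S) (x y : S) :
    R[X][Y] →+* S :=
  eval₂RingHom (eval₂RingHom f x) y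

section bieval

variable {R S T : Type*} [CommSemiring R] [CommSemiring S] [CommSemiring T]

@[simp] lemma bieval_C (f : R →+* S) (x y : S) (a : R[X]) : bieval f x y (C a) = a.eval₂ f x := by
  simp [bieval]

@[simp] lemma bieval_X (f : R →+* S) (x y : S) : bieval f x y X = y := by
  simp [bieval]

lemma bieval_map (h : R →+* S) (f : S →+* T) (x y : T) (P : R[X][Y]) :
    bieval f x y (P.map (mapRingHom h)) = bieval (f.comp h) x y P := by
  simp only [bieval, coe_eval₂RingHom, eval₂_map]
  congr 1
  ext <;> simp

lemma map_bieval (f : R →+* S) (h : S →+* T) (x y : S) (P : R[X][Y]) :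
    h (bieval f x y P) = bieval (h.comp f) (h x) (h y) P := by
  have : h.comp (bieval f x y) = bieval (h.comp f) (h x) (h y) := by
    ext <;> simp
  exact RingHom.congr_fun this P

lemma bieval_eq_eval_map (f : R →+* S) (x y : S) (P : R[X][Y]) :
    bieval f x y P = (P.map (eval₂RingHom f x)).eval y := by
  simp [bieval, eval_map]

end bieval

lemma aevalAeval_eq_bieval {R A : Type*} [CommSemiring R] [CommSemiring A] [Algebra R A] (x y : A)
    (P : R[X][Y]) : aevalAeval x y P = bieval (algebraMap R A) x y P := by
  have : (aevalAeval x y : R[X][Y] →ₐ[R] A).toRingHom = bieval (algebraMap R A) x y := by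
    ext <;> simp
  exact RingHom.congr_fun this P

section IntersectionNumber

variable {k : Type*} [Field k] {g h : k[X][Y]}

lemma natDegree_det_le {R ι : Type*} [CommRing R] [Fintype ι] [DecidableEq ι] {M : ℕ}
    (A : Matrix ι ι R[X]) (hA : ∀ i j, (A i j).natDegree ≤ M) :
    A.det.natDegree ≤ Fintype.card ι * M := by
  rw [Matrix.det_apply]
  refine natDegree_sum_le_of_forall_le _ _ fun σ _ => (natDegree_smul_le _ _).trans ?_
  calc (∏ i, A (σ i) i).natDegree ≤ ∑ i, (A (σ i) i).natDegree := natDegree_prod_le _ _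
    _ ≤ ∑ _i : ι, M := Finset.sum_le_sum fun i _ => hA _ _
    _ = Fintype.card ι * M := by simp

lemma natDegree_norm_mk_le (hg : g.Monic) {M : ℕ}
    (hM : ∀ b < g.natDegree, InnerDegreeLE M ((h * X ^ b) %ₘ g)) :
    (Algebra.norm k[X] (AdjoinRoot.mk g h)).natDegree ≤ g.natDegree * M := by
  let b := AdjoinRoot.powerBasisAux' hg
  rw [Algebra.norm_eq_matrix_det b]
  refine (natDegree_det_le (M := M) _ fun i j => ?_).trans_eq (by rw [Fintype.card_fin])
  have hb : b j = AdjoinRoot.mk g (X ^ (j : ℕ)) := by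
    rw [map_pow, AdjoinRoot.mk_X]
    exact (AdjoinRoot.powerBasis' hg).basis_eq_pow j
  rw [Algebra.leftMulMatrix_apply, LinearMap.toMatrix_apply, hb, Algebra.coe_lmul_eq_mul,
    LinearMap.mul_apply', ← map_mul, AdjoinRoot.powerBasisAux'_repr_apply_to_fun,
    AdjoinRoot.modByMonicHom_mk]
  exact hM j j.2 i

/-- The coordinate ring `k[x, y] / (g, h)` of the intersection of the plane curves `g` and `h`. -/
abbrev CurveIntersection (g h : k[X][Y]) : Type _ :=
  AdjoinRoot g ⧸ Ideal.span {AdjoinRoot.mk g h}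

lemma CurveIntersection.finite_and_finrank_le (hg : g.Monic) (hirr : Irreducible g)
    (hgh : ¬ g ∣ h) {M : ℕ} (hM : ∀ b < g.natDegree, InnerDegreeLE M ((h * X ^ b) %ₘ g)) :
    Module.Finite k (CurveIntersection g h) ∧
      Module.finrank k (CurveIntersection g h) ≤ g.natDegree * M := by
  have : IsDomain (AdjoinRoot g) := AdjoinRoot.isDomain_of_prime hirr.prime
  have hH : AdjoinRoot.mk g h ≠ 0 := by rwa [Ne, AdjoinRoot.mk_eq_zero]
  let b := AdjoinRoot.powerBasisAux' hg
  have hspan : Ideal.span {AdjoinRoot.mk g h} ≠ ⊥ := by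
    rwa [Ne, Ideal.span_singleton_eq_bot]
  refine ⟨Module.Finite.equiv (Ideal.quotientEquivDirectSum k b hspan).symm, ?_⟩
  exact (finrank_quotient_span_eq_natDegree_norm (F := k) b hH).trans_le
    (natDegree_norm_mk_le hg hM)

lemma CurveIntersection.exists_algHom {B : Type*} [CommRing B] [Algebra k B]
    (φ : k[X][Y] →ₐ[k] B) (hφg : φ g = 0) (hφh : φ h = 0) :
    ∃ ψ : CurveIntersection g h →ₐ[k] B,
      ∀ P, ψ (Ideal.Quotient.mk _ (AdjoinRoot.mk g P)) = φ P := by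
  let φ' : AdjoinRoot g →ₐ[k] B := Ideal.Quotient.liftₐ _ φ fun a ha => by
    obtain ⟨c, rfl⟩ := Ideal.mem_span_singleton.1 ha
    rw [map_mul, hφg, zero_mul]
  refine ⟨Ideal.Quotient.liftₐ _ φ' fun a ha => ?_, fun P => rfl⟩
  obtain ⟨c, rfl⟩ := Ideal.mem_span_singleton.1 ha
  rw [map_mul, show φ' (AdjoinRoot.mk g h) = 0 from hφh, zero_mul]

/-- Distinct points of `g = h = 0` are distinct `k`-algebra morphisms from the coordinate ring of
the intersection to `k`, so Dedekind's independence of characters bounds their number. -/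
lemma card_commonZeros_le (hg : g.Monic) (hirr : Irreducible g) (hgh : ¬ g ∣ h) {M : ℕ}
    (hM : ∀ b < g.natDegree, InnerDegreeLE M ((h * X ^ b) %ₘ g)) (S : Finset (k × k))
    (hSg : ∀ P ∈ S, bieval (RingHom.id k) P.1 P.2 g = 0)
    (hSh : ∀ P ∈ S, bieval (RingHom.id k) P.1 P.2 h = 0) : S.card ≤ g.natDegree * M := by
  obtain ⟨hfin, hrank⟩ := CurveIntersection.finite_and_finrank_le hg hirr hgh hM
  have points (P : S) := CurveIntersection.exists_algHom (aevalAeval (R := k) P.1.1 P.1.2)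
    ((aevalAeval_eq_bieval ..).trans (hSg P P.2)) ((aevalAeval_eq_bieval ..).trans (hSh P P.2))
  choose ψ hψ using points
  have hinj : Function.Injective ψ := fun P Q hPQ => by
    have h (R : k[X][Y]) : aevalAeval (R := k) P.1.1 P.1.2 R = aevalAeval Q.1.1 Q.1.2 R := by
      rw [← hψ, ← hψ, hPQ]
    exact Subtype.ext (Prod.ext (by simpa using h (C X)) (by simpa using h X))
  refine le_trans ?_ hrank
  rw [← Module.finrank_linearMap_self k k, ← Fintype.card_coe]
  exact ((linearIndependent_toLinearMap k (CurveIntersection g h) k).comp ψ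
    hinj).fintype_card_le_finrank

end IntersectionNumber

section GeometricIrreducibility

lemma exists_ringHom_section {A B : Type*} [Field A] [IsAlgClosed A] [CommRing B] [Nontrivial B]
    [Algebra A B] [Algebra.FiniteType A B] :
    ∃ π : B →+* A, π.comp (algebraMap A B) = RingHom.id A := by
  obtain ⟨m, hm⟩ := Ideal.exists_maximal B
  let _ : Field (B ⧸ m) := Ideal.Quotient.field m
  have : Algebra.FiniteType A (B ⧸ m) :=
    .of_surjective (Ideal.Quotient.mkₐ A m) (Ideal.Quotient.mkₐ_surjective A m)
  have : Module.Finite A (B ⧸ m) := finite_of_finite_type_of_isJacobsonRing A (B ⧸ m)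
  let e := RingEquiv.ofBijective (algebraMap A (B ⧸ m))
    IsAlgClosed.algebraMap_bijective_of_isIntegral
  exact ⟨e.symm.toRingHom.comp (Ideal.Quotient.mk m), RingHom.ext e.symm_apply_apply⟩

lemma mem_lifts_mapRingHom {B W : Type*} [CommRing B] [CommRing W] (f : B →+* W) (P : W[X][Y])
    (h : ∀ i, ↑(P.coeff i).coeffs ⊆ Set.range f) : P ∈ lifts (mapRingHom f) := by
  rw [lifts_iff_coeff_lifts]
  intro i
  obtain ⟨Q, hQ⟩ := (mem_lifts _).1 ((lifts_iff_coeffs_subset_range _).2 (h i))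
  exact ⟨Q, hQ⟩

lemma exists_finiteType_lifts (A : Type*) {W : Type*} [CommRing A] [CommRing W] [Algebra A W]
    (P Q : W[X][Y]) : ∃ B : Subalgebra A W, Algebra.FiniteType A B ∧
      P ∈ lifts (mapRingHom (algebraMap B W)) ∧ Q ∈ lifts (mapRingHom (algebraMap B W)) := by
  classical
  let coeffs (R : W[X][Y]) : Finset W := R.support.biUnion fun i => (R.coeff i).coeffs
  have mem_lifts_of_subset (B : Subalgebra A W) (R : W[X][Y]) (hR : ↑(coeffs R) ⊆ (B : Set W)) :
      R ∈ lifts (mapRingHom (algebraMap B W)) := mem_lifts_mapRingHom _ _ fun i c hc => by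
    have hi : i ∈ R.support := mem_support_iff.2 fun h0 => by simp [h0] at hc
    exact ⟨⟨c, hR (Finset.mem_biUnion.2 ⟨i, hi, hc⟩)⟩, rfl⟩
  refine ⟨Algebra.adjoin A ↑(coeffs P ∪ coeffs Q), ?_,
    mem_lifts_of_subset _ _ fun c hc => Algebra.subset_adjoin (by simp_all),
    mem_lifts_of_subset _ _ fun c hc => Algebra.subset_adjoin (by simp_all)⟩
  rw [← Subalgebra.fg_iff_finiteType]
  exact ⟨_, rfl⟩

/-- A factorisation over `W` is defined over a finitely generated `A`-algebra, and specialises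
along a rational point of that algebra to a factorisation over `A`. -/
lemma irreducible_map_of_isAlgClosed {A W : Type*} [Field A] [IsAlgClosed A] [Field W]
    (i : A →+* W) {g : A[X][Y]} (hg : g.Monic) (hirr : Irreducible g) :
    Irreducible (g.map (mapRingHom i)) := by
  algebraize [i]
  obtain ⟨hg1, hfac⟩ := hg.irreducible_iff_natDegree.1 hirr
  refine (hg.map _).irreducible_iff_natDegree.2 ⟨fun h => hg1 ?_, fun f h hf hh hfh => ?_⟩
  · rw [← hg.natDegree_eq_zero, ← hg.natDegree_map (mapRingHom i), h, natDegree_one]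
  obtain ⟨B, hB, hfB, hhB⟩ := exists_finiteType_lifts A f h
  obtain ⟨f', hf', hfdeg, hf'm⟩ := lifts_and_natDegree_eq_and_monic hfB hf
  obtain ⟨h', hh', hhdeg, hh'm⟩ := lifts_and_natDegree_eq_and_monic hhB hh
  have hprod : f' * h' = g.map (mapRingHom (algebraMap A B)) := by
    refine map_injective (mapRingHom (algebraMap B W)) (map_injective _ Subtype.val_injective) ?_
    rw [Polynomial.map_mul, hf', hh', hfh, Polynomial.map_map, mapRingHom_comp]
    rfl
  obtain ⟨π, hπ⟩ := exists_ringHom_section (A := A) (B := B)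
  have := hfac (f'.map (mapRingHom π)) (h'.map (mapRingHom π)) (hf'm.map _) (hh'm.map _) (by
    rw [← Polynomial.map_mul, hprod, Polynomial.map_map, mapRingHom_comp, hπ, mapRingHom_id,
      Polynomial.map_id])
  rwa [hf'm.natDegree_map, hh'm.natDegree_map, hfdeg, hhdeg] at this

end GeometricIrreducibility

section PthPowers

lemma pow_ne_X_of_isSeparable {k : Type*} (K : Type*) {E : Type*} [Field k] [Field K] [Field E]
    (p : ℕ) [hp : Fact p.Prime] [CharP k p] [Algebra k[X] E] [Algebra k[X] K]
    [IsFractionRing k[X] K] [Algebra K E] [IsScalarTower k[X] K E] [Algebra.IsSeparable K E]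
    (e : E) : e ^ p ≠ algebraMap k[X] E X := by
  intro he
  have : CharP K p := charP_of_injective_algebraMap (IsFractionRing.injective k[X] K) p
  have : ExpChar K p := ExpChar.prime hp.out
  have hmem : e ∈ perfectClosure K E := by
    rw [mem_perfectClosure_iff_pow_mem p]
    exact ⟨1, algebraMap k[X] K X, by rw [pow_one, he, ← IsScalarTower.algebraMap_apply]⟩
  rw [perfectClosure.eq_bot_of_isSeparable, IntermediateField.mem_bot] at hmem
  obtain ⟨e, rfl⟩ := hmem
  have he' : e ^ p = algebraMap k[X] K X := by
    apply (algebraMap K E).injective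
    rw [map_pow, he, ← IsScalarTower.algebraMap_apply]
  have hinteg : IsIntegral k[X] e := .of_pow hp.out.pos (he' ▸ isIntegral_algebraMap)
  obtain ⟨f, rfl⟩ := IsIntegrallyClosed.isIntegral_iff.1 hinteg
  rw [← map_pow] at he'
  have hdeg := congrArg natDegree (IsFractionRing.injective k[X] K he')
  rw [natDegree_pow, natDegree_X] at hdeg
  exact hp.out.one_lt.ne' (Nat.eq_one_of_mul_eq_one_right hdeg)

lemma pow_le_natDegree_minpoly_fieldRange {E : Type*} [Field E] (p : ℕ) [hp : Fact p.Prime]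
    [CharP E p] (n : ℕ) (x : E) (hx : ∀ e : E, e ^ p ≠ x) :
    p ^ n ≤ (minpoly (iterateFrobenius E p n).fieldRange x).natDegree := by
  set F := (iterateFrobenius E p n).fieldRange
  have : CharP F p := (algebraMap F E).charP (algebraMap F E).injective p
  have : ExpChar F p := ExpChar.prime hp.out
  have hxF : x ^ p ^ n = algebraMap F E ⟨x ^ p ^ n, ⟨x, by simp [iterateFrobenius_def]⟩⟩ := rfl
  have hinteg : IsIntegral F x := .of_pow (pow_pos hp.out.pos n) (hxF ▸ isIntegral_algebraMap)
  obtain ⟨s, ⟨_, e, rfl⟩, -, hs⟩ :=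
    Monic.eq_X_pow_char_pow_sub_C_of_natSepDegree_eq_one_of_irreducible p
      (minpoly.monic hinteg) (minpoly.irreducible hinteg)
      ((minpoly.natSepDegree_eq_one_iff_pow_mem p).2 ⟨n, _, hxF.symm⟩)
  have hroot : x ^ p ^ s = e ^ p ^ n := by
    have := minpoly.aeval F x
    rwa [hs, map_sub, map_pow, aeval_X, aeval_C, sub_eq_zero] at this
  rw [hs, natDegree_X_pow_sub_C]
  refine Nat.pow_le_pow_right hp.out.pos (not_lt.1 fun hsn => ?_)
  obtain ⟨d, rfl⟩ : ∃ d, n = d + 1 + s := ⟨n - s - 1, by omega⟩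
  rw [pow_add p, pow_mul] at hroot
  have := iterateFrobenius_inj E p s (a₁ := x) (a₂ := e ^ p ^ (d + 1)) (by
    simpa only [iterateFrobenius_def] using hroot)
  exact hx (e ^ p ^ d) (by rw [this, pow_succ, pow_mul])

end PthPowers

section IndependenceOverPowers

variable {k : Type*} [Field k] {g h : k[X][Y]}

lemma InnerDegreeLE.mul_X_pow_modByMonic {s c b : ℕ} (hh : InnerDegreeLE s h)
    (hdeg : h.natDegree < g.natDegree) (hg : g.Monic) (hgc : InnerDegreeLE c g)
    (hb : b < g.natDegree) :
    InnerDegreeLE (s + c * (2 * g.natDegree)) ((h * X ^ b) %ₘ g) := by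
  refine ((hh.mul_X_pow b).modByMonic hg hgc).mono ?_
  gcongr
  refine natDegree_mul_le.trans ?_
  rw [natDegree_X_pow]
  omega

/-- The powers `1, x, …, x ^ (N - 1)` are independent in the coordinate ring of the intersection of
`g` and a nonzero `h`, whose dimension is less than `N`. -/
lemma eq_zero_of_bieval_eq_zero {E : Type*} [Field E] [Algebra k E] {x y : E}
    (hg : g.Monic) (hirr : Irreducible g) {c s : ℕ} (hc : InnerDegreeLE c g)
    (hlt : g.natDegree * (s + c * (2 * g.natDegree)) < (minpoly k x).natDegree)
    (hs : InnerDegreeLE s h) (hdeg : h.natDegree < g.natDegree)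
    (hgxy : bieval (algebraMap k E) x y g = 0) (hhxy : bieval (algebraMap k E) x y h = 0) :
    h = 0 := by
  by_contra h0
  have hgh : ¬ g ∣ h := fun hdvd => hdeg.not_ge (natDegree_le_of_dvd hdvd h0)
  obtain ⟨hfin, hrank⟩ := CurveIntersection.finite_and_finrank_le hg hirr hgh
    fun b hb => hs.mul_X_pow_modByMonic hdeg hg hc hb
  obtain ⟨ψ, hψ⟩ := CurveIntersection.exists_algHom (aevalAeval (R := k) x y)
    ((aevalAeval_eq_bieval ..).trans hgxy) ((aevalAeval_eq_bieval ..).trans hhxy)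
  have hindep : LinearIndependent k fun s : Fin (minpoly k x).natDegree =>
      (Ideal.Quotient.mk _ (AdjoinRoot.mk g (C (X ^ (s : ℕ)))) : CurveIntersection g h) := by
    refine LinearIndependent.of_comp ψ.toLinearMap ?_
    convert linearIndependent_pow (K := k) x using 2 with s
    simp only [Function.comp_apply, AlgHom.toLinearMap_apply, hψ, aevalAeval_C, aeval_X_pow]
  have hcard := hindep.fintype_card_le_finrank.trans hrank
  rw [Fintype.card_fin] at hcard
  exact hlt.not_ge hcard

lemma eq_zero_of_bieval_iterateFrobenius_eq_zero {E : Type*} [Field E] [IsAlgClosed k] (p : ℕ)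
    [hp : Fact p.Prime] [CharP E p] (i : k →+* E) (n : ℕ) {x y : E}
    (hx : ∀ e : E, e ^ p ≠ x) (hg : g.Monic) (hirr : Irreducible g) {c s : ℕ}
    (hc : InnerDegreeLE c g) (hlt : g.natDegree * (s + c * (2 * g.natDegree)) < p ^ n)
    {P : E[X][Y]} (hs : InnerDegreeLE s P) (hdeg : P.natDegree < g.natDegree)
    (hgxy : bieval i x y g = 0) (hP : bieval (iterateFrobenius E p n) x y P = 0) : P = 0 := by
  set F := (iterateFrobenius E p n).fieldRange
  have mem_F (a : k) : i a ∈ F := by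
    obtain ⟨b, rfl⟩ := IsAlgClosed.exists_pow_nat_eq a (pow_pos hp.out.pos n)
    exact ⟨i b, by rw [iterateFrobenius_def, map_pow]⟩
  let κ : k →+* F := i.codRestrict F mem_F
  let frob : E →+* F := (iterateFrobenius E p n).rangeRestrictField
  have hPF : P.map (mapRingHom frob) = 0 := by
    have hgdeg := hg.natDegree_map (mapRingHom κ)
    refine eq_zero_of_bieval_eq_zero (hg.map (mapRingHom κ))
      (irreducible_map_of_isAlgClosed κ hg hirr) (hc.map κ) ?_ (hs.map frob) ?_
      ((bieval_map _ _ x y g).trans hgxy) ((bieval_map _ _ x y P).trans hP)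
    · rw [hgdeg]
      exact hlt.trans_le (pow_le_natDegree_minpoly_fieldRange p n x hx)
    · rw [hgdeg]
      exact natDegree_map_le.trans_lt hdeg
  rwa [Polynomial.map_eq_zero_iff (map_injective _ frob.injective)] at hPF

end IndependenceOverPowers

/-! ### Stepanov's method -/

section SeparableAway

/-- The univariate polynomial `g` becomes separable once `D` is inverted. -/
def SeparableAway {R : Type*} [CommRing R] (g : R[X]) (D : R) : Prop :=
  C D ∈ Ideal.span {g, derivative g}

lemma SeparableAway.map {R S : Type*} [CommRing R] [CommRing S] {g : R[X]} {D : R}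
    (h : SeparableAway g D) (f : R →+* S) : SeparableAway (g.map f) (f D) := by
  have := Ideal.mem_map_of_mem (mapRingHom f) h
  simpa only [SeparableAway, Ideal.map_span, Set.image_pair, coe_mapRingHom, map_C,
    derivative_map] using this

lemma SeparableAway.separable {K : Type*} [Field K] {g : K[X]} {D : K} (h : SeparableAway g D)
    (hD : D ≠ 0) : g.Separable := by
  obtain ⟨a, b, hab⟩ := Ideal.mem_span_pair.1 h
  refine ⟨C D⁻¹ * a, C D⁻¹ * b, ?_⟩
  rw [mul_assoc, mul_assoc, ← mul_add, hab, ← C_mul, inv_mul_cancel₀ hD, C_1]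

end SeparableAway

section FunctionField

universe u

variable {k : Type u} [Field k] {g : k[X][Y]} {D : k[X]}

lemma exists_functionField (p : ℕ) [Fact p.Prime] [CharP k p] (hg : g.Monic)
    (hirr : Irreducible g) (hsep : SeparableAway g D) (hD : D ≠ 0) :
    ∃ (E : Type u) (_ : Field E) (i : k →+* E) (x y : E), (∀ e : E, e ^ p ≠ x) ∧
      ∀ P, bieval i x y P = 0 ↔ g ∣ P := by
  let K := FractionRing k[X]
  have hinj : Function.Injective (algebraMap k[X] K) := IsFractionRing.injective k[X] K
  let G : K[X] := g.map (algebraMap k[X] K)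
  have : Fact (Irreducible G) := ⟨hg.irreducible_iff_irreducible_map_fraction_map.1 hirr⟩
  have hGsep : G.Separable := (hsep.map _).separable ((map_ne_zero_iff _ hinj).2 hD)
  have hroot : IsSeparable K (AdjoinRoot.root G) := by
    rw [IsSeparable, AdjoinRoot.minpoly_root (hg.map _).ne_zero, (hg.map _).leadingCoeff, inv_one,
      C_1, mul_one]
    exact hGsep
  have : Algebra.IsSeparable K (AdjoinRoot G) := by
    have := (IntermediateField.isSeparable_adjoin_simple_iff_isSeparable K _).2 hroot
    rw [IntermediateField.adjoin_root_eq_top] at this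
    exact .of_algHom K (⊤ : IntermediateField K (AdjoinRoot G))
      IntermediateField.topEquiv.symm.toAlgHom
  refine ⟨AdjoinRoot G, inferInstance, (algebraMap k[X] (AdjoinRoot G)).comp C,
    algebraMap k[X] (AdjoinRoot G) X, AdjoinRoot.root G,
    fun e => pow_ne_X_of_isSeparable (k := k) K p e, fun P => ?_⟩
  have hbieval : bieval ((algebraMap k[X] (AdjoinRoot G)).comp C)
      (algebraMap k[X] (AdjoinRoot G) X) (AdjoinRoot.root G) =
        (AdjoinRoot.mk G).comp (mapRingHom (algebraMap k[X] K)) := by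
    ext <;> simp [IsScalarTower.algebraMap_apply k[X] K (AdjoinRoot G)]
  rw [hbieval, RingHom.comp_apply, coe_mapRingHom, AdjoinRoot.mk_eq_zero, map_dvd_map _ hinj hg]

end FunctionField

section Bidegree

/-- The bivariate polynomial `P` has degree at most `s` in each of its variables. -/
def BidegreeLE {R : Type*} [Semiring R] (s : ℕ) (P : R[X][Y]) : Prop :=
  InnerDegreeLE s P ∧ P.natDegree ≤ s

namespace BidegreeLE

variable {R : Type*} [Semiring R] {s t : ℕ} {P Q : R[X][Y]}

lemma mono (h : BidegreeLE s P) (hst : s ≤ t) : BidegreeLE t P :=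
  ⟨h.1.mono hst, h.2.trans hst⟩

lemma mul (hP : BidegreeLE s P) (hQ : BidegreeLE t Q) : BidegreeLE (s + t) (P * Q) :=
  ⟨hP.1.mul hQ.1, natDegree_mul_le_of_le hP.2 hQ.2⟩

lemma pow (hP : BidegreeLE s P) (n : ℕ) : BidegreeLE (n * s) (P ^ n) :=
  ⟨hP.1.pow n, natDegree_pow_le_of_le n hP.2⟩

lemma C {a : R[X]} (h : a.natDegree ≤ s) : BidegreeLE s (C a) :=
  ⟨.C h, (natDegree_C a).trans_le (Nat.zero_le s)⟩

end BidegreeLE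

end Bidegree

section AuxiliaryPolynomial

variable {R S : Type*} [CommSemiring R] [CommSemiring S] {l m n n₀ : ℕ}

/-- The polynomial `∑ x ^ (s b) y ^ (s c) w_{b,c}`: for `s = 1` and `w` consisting of `q`-th powers
it is Stepanov's auxiliary polynomial, for `s = q` its `q`-th power at the points being counted. -/
noncomputable def boxSum (s : ℕ) (w : Fin (l + 1) → Fin n → R[X][Y]) : R[X][Y] :=
  ∑ b : Fin (l + 1), ∑ c : Fin n, C (X ^ (s * b.val)) * X ^ (s * c.val) * w b c

lemma bieval_boxSum (f : R →+* S) (x y : S) (s : ℕ) (w : Fin (l + 1) → Fin n → R[X][Y]) :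
    bieval f x y (boxSum s w) =
      ∑ b : Fin (l + 1), ∑ c : Fin n, x ^ (s * b.val) * y ^ (s * c.val) * bieval f x y (w b c) := by
  simp only [boxSum, map_sum, map_mul, map_pow, bieval_C, bieval_X, eval₂_X]

lemma InnerDegreeLE.boxSum {s d : ℕ} {w : Fin (l + 1) → Fin n → R[X][Y]}
    (hw : ∀ b c, InnerDegreeLE d (w b c)) : InnerDegreeLE (s * l + d) (boxSum s w) :=
  .sum _ fun b _ => .sum _ fun c _ => .mul (.mul_X_pow (.C ((natDegree_X_pow_le _).trans
    (Nat.mul_le_mul_left s (Nat.lt_succ_iff.1 b.2)))) _) (hw b c)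

lemma natDegree_boxSum_le {s d : ℕ} {w : Fin (l + 1) → Fin n → R[X][Y]}
    (hw : ∀ b c, (w b c).natDegree ≤ d) : (boxSum s w).natDegree ≤ s * (n - 1) + d :=
  natDegree_sum_le_of_forall_le _ _ fun b _ => natDegree_sum_le_of_forall_le _ _ fun c _ =>
    natDegree_mul_le_of_le ((natDegree_C_mul_X_pow_le _ _).trans
      (Nat.mul_le_mul_left s (Nat.le_pred_of_lt c.2))) (hw b c)

lemma coeff_coeff_boxSum_one (V : Fin (l + 1) → Fin n → R) (b : Fin (l + 1)) (c : Fin n) :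
    ((boxSum 1 fun b c => C (C (V b c))).coeff c).coeff b = V b c := by
  classical
  have : (boxSum 1 fun b c => C (C (V b c))) = ofFn n fun c => ofFn (l + 1) fun b => V b c := by
    simp only [boxSum, ofFn_eq_sum_monomial, ← C_mul_X_pow_eq_monomial, map_sum, one_mul]
    rw [Finset.sum_comm]
    refine Finset.sum_congr rfl fun c _ => Finset.sum_congr rfl fun b _ => ?_
    rw [C_mul]
    ring
  rw [this, ofFn_coeff_eq_val_of_lt _ c.2, ofFn_coeff_eq_val_of_lt _ b.2]

/-- The combination `∑ r_{a,j} x ^ a v_j`. -/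
noncomputable def shiftedSum (v : Fin n₀ → R[X][Y]) (r : Fin (m + 1) → Fin n₀ → R) : R[X][Y] :=
  ∑ j, C (∑ a : Fin (m + 1), C (r a j) * X ^ a.val) * v j

lemma bieval_shiftedSum (f : R →+* S) (x y : S) (v : Fin n₀ → R[X][Y])
    (r : Fin (m + 1) → Fin n₀ → R) :
    bieval f x y (shiftedSum v r) =
      ∑ j, (∑ a : Fin (m + 1), f (r a j) * x ^ a.val) * bieval f x y (v j) := by
  simp only [shiftedSum, map_sum, map_mul, bieval_C, eval₂_C, eval₂_pow, eval₂_X]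

lemma natDegree_sum_C_mul_X_pow_le (a : Fin (m + 1) → R) :
    (∑ i : Fin (m + 1), C (a i) * X ^ i.val).natDegree ≤ m :=
  natDegree_sum_le_of_forall_le _ _ fun i _ =>
    (natDegree_C_mul_X_pow_le _ _).trans (Nat.lt_succ_iff.1 i.2)

lemma InnerDegreeLE.shiftedSum {d : ℕ} {v : Fin n₀ → R[X][Y]} (hv : ∀ j, InnerDegreeLE d (v j))
    (r : Fin (m + 1) → Fin n₀ → R) : InnerDegreeLE (m + d) (shiftedSum v r) :=
  .sum _ fun j _ => .mul (.C (natDegree_sum_C_mul_X_pow_le _)) (hv j)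

lemma natDegree_shiftedSum_le {d : ℕ} {v : Fin n₀ → R[X][Y]} (hv : ∀ j, (v j).natDegree ≤ d)
    (r : Fin (m + 1) → Fin n₀ → R) : (shiftedSum v r).natDegree ≤ d :=
  natDegree_sum_le_of_forall_le _ _ fun j _ => (natDegree_C_mul_le _ _).trans (hv j)

lemma eq_zero_of_dvd_shiftedSum {R : Type*} [CommRing R] {g : R[X][Y]} {v : Fin n₀ → R[X][Y]}
    (hv : LinearIndependent R[X] fun j => AdjoinRoot.mk g (v j)) {r : Fin (m + 1) → Fin n₀ → R}
    (h : g ∣ shiftedSum v r) : r = 0 := by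
  classical
  rw [← AdjoinRoot.mk_eq_zero, shiftedSum, map_sum] at h
  have hrow := Fintype.linearIndependent_iff.1 hv
    (fun j => ∑ a : Fin (m + 1), C (r a j) * X ^ a.val) (by
      simpa only [map_mul, AdjoinRoot.mk_C, Algebra.smul_def, AdjoinRoot.algebraMap_eq] using h)
  have hofFn (j : Fin n₀) : ofFn (m + 1) (fun a => r a j) = 0 := by
    simpa only [ofFn_eq_sum_monomial, C_mul_X_pow_eq_monomial] using hrow j
  ext a j
  exact congrFun (injective_ofFn _ ((hofFn j).trans (map_zero _).symm)) a

end AuxiliaryPolynomial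

section LinearAlgebra

variable {k V : Type*} [Field k] [AddCommGroup V] [Module k V]

lemma exists_ne_zero_dvd_of_lt_finrank {g : k[X][Y]} (hg : g.Monic) {N : ℕ}
    (L : V →ₗ[k] k[X][Y]) (hL : ∀ r, InnerDegreeLE N (L r %ₘ g))
    (hN : g.natDegree * (N + 1) < Module.finrank k V) : ∃ r ≠ 0, g ∣ L r := by
  have : Module.Finite k V := Module.finite_of_finrank_pos (by omega)
  let T : V →ₗ[k] Fin g.natDegree → Fin (N + 1) → k :=
    LinearMap.pi fun j => LinearMap.pi fun b =>
      (lcoeff k (b : ℕ)) ∘ₗ ((lcoeff k[X] (j : ℕ)).restrictScalars k) ∘ₗ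
        ((modByMonicHom g).restrictScalars k) ∘ₗ L
  have hT (r : V) (j b) : T r j b = ((L r %ₘ g).coeff j).coeff b := rfl
  obtain ⟨r, hr, hr0⟩ := Submodule.exists_mem_ne_zero_of_ne_bot
    (LinearMap.ker_ne_bot_of_finrank_lt (f := T) (by
      simpa [Module.finrank_pi_fintype] using hN))
  refine ⟨r, hr0, (modByMonic_eq_zero_iff_dvd hg).1 ?_⟩
  ext j b
  rw [coeff_zero, coeff_zero]
  rcases lt_or_ge j g.natDegree with hj | hj
  · rcases lt_or_ge b (N + 1) with hb | hb
    · rw [← hT r ⟨j, hj⟩ ⟨b, hb⟩, LinearMap.mem_ker.1 hr]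
      rfl
    · exact coeff_eq_zero_of_natDegree_lt ((hL r j).trans_lt hb)
  · rw [coeff_eq_zero_of_degree_lt ((degree_modByMonic_lt _ hg).trans_le
      (degree_le_of_natDegree_le hj)), coeff_zero]

end LinearAlgebra

section Stepanov

variable {k : Type*} [Field k] {g : k[X][Y]} {D : k[X]} {c l m n n₀ p e : ℕ}
  {v v' : Fin n₀ → k[X][Y]}

lemma exists_dvd_boxSum (hg : g.Monic) (hirr : Irreducible g) (hgc : InnerDegreeLE c g)
    (hv' : ∀ j, BidegreeLE c (v' j)) {q : ℕ}
    (hm : m + q * l + c + c * (g.natDegree * q + c) + 1 < (m + 1) * n₀ * (l + 1)) :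
    ∃ r : Fin (l + 1) → Fin g.natDegree → Fin (m + 1) → Fin n₀ → k, r ≠ 0 ∧
      g ∣ boxSum q fun b c => shiftedSum v' (r b c) := by
  let L : (Fin (l + 1) → Fin g.natDegree → Fin (m + 1) → Fin n₀ → k) →ₗ[k] k[X][Y] :=
    { toFun r := boxSum q fun b c => shiftedSum v' (r b c)
      map_add' r s := by
        simp only [boxSum, shiftedSum, Pi.add_apply, C_add, add_mul, mul_add,
          Finset.sum_add_distrib]
      map_smul' a r := by
        simp only [boxSum, shiftedSum, Pi.smul_apply, smul_eq_mul, C_mul, Finset.smul_sum,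
          Finset.mul_sum, RingHom.id_apply, map_sum, Finset.sum_mul]
        refine Finset.sum_congr rfl fun b _ => Finset.sum_congr rfl fun c _ =>
          Finset.sum_congr rfl fun j _ => Finset.sum_congr rfl fun i _ => ?_
        simp only [Algebra.smul_def, Polynomial.algebraMap_apply, Algebra.algebraMap_self,
          RingHom.id_apply]
        ring }
  refine exists_ne_zero_dvd_of_lt_finrank hg (N := q * l + (m + c) + c * (q * g.natDegree + c)) L
    (fun r => ?_) ?_
  · refine ((InnerDegreeLE.boxSum fun b c => .shiftedSum (fun j => (hv' j).1) _).modByMonic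
      hg hgc).mono ?_
    gcongr
    refine (natDegree_boxSum_le fun b c =>
      natDegree_shiftedSum_le (fun j => (hv' j).2) _).trans ?_
    gcongr
    exact Nat.sub_le _ _
  · simp only [Module.finrank_pi_fintype, Module.finrank_self, Finset.sum_const, Finset.card_univ,
      Fintype.card_fin, smul_eq_mul, mul_one]
    have := Nat.mul_lt_mul_of_pos_left hm (hg.natDegree_pos.2 hirr.ne_one)
    linarith

lemma map_bieval_shiftedSum (ρ : k →+* k) {x y u : k} (hx : ρ x = x)
    (hu : ∀ j, ρ (bieval (RingHom.id k) x y (v j)) = u * bieval (RingHom.id k) x y (v' j))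
    (r : Fin (m + 1) → Fin n₀ → k) :
    ρ (bieval (RingHom.id k) x y (shiftedSum v r)) =
      u * bieval (RingHom.id k) x y (shiftedSum v' fun a j => ρ (r a j)) := by
  simp only [bieval_shiftedSum, map_sum, map_mul, map_pow, hx, hu, RingHom.id_apply,
    Finset.mul_sum]
  exact Finset.sum_congr rfl fun j _ => by ring

variable [hp : Fact p.Prime] [CharP k p]

lemma bieval_boxSum_pow {x y u : k} (hx : iterateFrobenius k p (2 * e) x = x)
    (hu : ∀ j, iterateFrobenius k p (2 * e) (bieval (RingHom.id k) x y (v j)) =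
      u * bieval (RingHom.id k) x y (v' j))
    (ε : Fin (l + 1) → Fin n → Fin (m + 1) → Fin n₀ → k) :
    bieval (RingHom.id k) x y (boxSum 1 fun b c => shiftedSum v (ε b c) ^ p ^ e) ^ p ^ e =
      u * bieval (RingHom.id k) x y
        (boxSum (p ^ e) fun b c => shiftedSum v' fun a j =>
          iterateFrobenius k p (2 * e) (ε b c a j)) := by
  have hsq (z : k) : iterateFrobenius k p e (z ^ p ^ e) = iterateFrobenius k p (2 * e) z := by
    rw [iterateFrobenius_def, iterateFrobenius_def, two_mul, pow_add, pow_mul]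
  rw [← iterateFrobenius_def]
  simp only [bieval_boxSum, map_sum, map_mul, Finset.mul_sum]
  refine Finset.sum_congr rfl fun b _ => Finset.sum_congr rfl fun c _ => ?_
  rw [map_pow (bieval _ x y), hsq, map_bieval_shiftedSum _ hx hu]
  simp only [iterateFrobenius_def]
  ring

variable [IsAlgClosed k]

lemma not_dvd_boxSum (hg : g.Monic) (hirr : Irreducible g) (hsep : SeparableAway g D)
    (hD : D ≠ 0) (hgc : InnerDegreeLE c g)
    (hv : LinearIndependent k[X] fun j => AdjoinRoot.mk g (v j))
    (hl : g.natDegree * (l + c * (2 * g.natDegree)) < p ^ e)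
    {ε : Fin (l + 1) → Fin g.natDegree → Fin (m + 1) → Fin n₀ → k} (hε : ε ≠ 0) :
    ¬ g ∣ boxSum 1 fun b c => shiftedSum v (ε b c) ^ p ^ e := by
  intro hdvd
  obtain ⟨E, _, i, x, y, hx, hE⟩ := exists_functionField p hg hirr hsep hD
  have : CharP E p := charP_of_injective_ringHom i.injective p
  let V (b : Fin (l + 1)) (c : Fin g.natDegree) : E := bieval i x y (shiftedSum v (ε b c))
  have hzero : bieval (iterateFrobenius E p e) x y (boxSum 1 fun b c => C (C (V b c))) = 0 := by
    rw [← (hE _).2 hdvd, bieval_boxSum, bieval_boxSum]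
    simp only [bieval_C, eval₂_C, map_pow, iterateFrobenius_def, V]
  have hbox := eq_zero_of_bieval_iterateFrobenius_eq_zero p i e hx hg hirr hgc hl
    (by simpa using InnerDegreeLE.boxSum (s := 1) (d := 0) fun b c => .C (natDegree_C (V b c)).le)
    ((natDegree_boxSum_le (d := 0) fun _ _ => (natDegree_C _).le).trans_lt (by
      have := hg.natDegree_pos.2 hirr.ne_one; omega))
    ((hE g).2 dvd_rfl) hzero
  refine hε (funext fun b => funext fun c => eq_zero_of_dvd_shiftedSum hv ((hE _).1 ?_))
  change V b c = 0
  rw [← coeff_coeff_boxSum_one V, hbox, coeff_zero, coeff_zero]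

theorem card_le_of_frobenius_eq (hg : g.Monic) (hirr : Irreducible g) (hsep : SeparableAway g D)
    (hD : D ≠ 0) (hgc : InnerDegreeLE c g) (hv : ∀ j, BidegreeLE c (v j))
    (hv' : ∀ j, BidegreeLE c (v' j))
    (hind : LinearIndependent k[X] fun j => AdjoinRoot.mk g (v j))
    (hl : g.natDegree * (l + c * (2 * g.natDegree)) < p ^ e)
    (hm : m + p ^ e * l + c + c * (g.natDegree * p ^ e + c) + 1 < (m + 1) * n₀ * (l + 1))
    (S : Finset (k × k)) (hSx : ∀ P ∈ S, iterateFrobenius k p (2 * e) P.1 = P.1)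
    (hSg : ∀ P ∈ S, bieval (RingHom.id k) P.1 P.2 g = 0)
    (hSv : ∀ P ∈ S, ∃ u, ∀ j,
      iterateFrobenius k p (2 * e) (bieval (RingHom.id k) P.1 P.2 (v j)) =
        u * bieval (RingHom.id k) P.1 P.2 (v' j)) :
    S.card ≤ g.natDegree * (l + p ^ e * (m + c) + c * (2 * g.natDegree + p ^ e * c)) := by
  obtain ⟨r, hr, hdvd⟩ := exists_dvd_boxSum (q := p ^ e) hg hirr hgc hv' hm
  choose ε hε using fun b c a j =>
    IsAlgClosed.exists_pow_nat_eq (r b c a j) (pow_pos hp.out.pos (2 * e))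
  simp only [← iterateFrobenius_def] at hε
  have hε0 : ε ≠ 0 := by
    rintro rfl
    refine hr (funext fun b => funext fun c => funext fun a => funext fun j => ?_)
    rw [← hε b c a j]
    exact map_zero _
  refine card_commonZeros_le hg hirr (not_dvd_boxSum hg hirr hsep hD hgc hind hl hε0)
    (fun b hb => ?_) S hSg fun P hP => ?_
  · refine (((InnerDegreeLE.boxSum fun b c =>
      (InnerDegreeLE.shiftedSum (fun j => (hv j).1) _).pow _).mul_X_pow b).modByMonic
        hg hgc).mono ?_
    rw [one_mul]
    gcongr
    have := natDegree_boxSum_le (s := 1) fun b c => natDegree_pow_le_of_le (p ^ e)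
      (natDegree_shiftedSum_le (fun j => (hv j).2) (ε b c))
    have := natDegree_mul_le_of_le this (natDegree_X_pow_le (R := k[X]) b)
    omega
  · obtain ⟨u, hu⟩ := hSv P hP
    have hpow := bieval_boxSum_pow (hSx P hP) hu ε
    simp only [hε] at hpow
    obtain ⟨w, hw⟩ := hdvd
    rw [hw, map_mul, hSg P hP, zero_mul, mul_zero] at hpow
    exact eq_zero_of_pow_eq_zero hpow

/-- The size of `q` beyond which Stepanov's method, for a curve of degree `n` and `n₀` functions of
bidegree at most `c`, yields the main term `n q ^ 2 / n₀` up to a factor `1 + 1 / (2 n₀)`. -/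
def stepanovThreshold (n n₀ c : ℕ) : ℕ :=
  n * (4 * n₀ * c * n + 1 + c * (2 * n)) + 1 + 4 * n₀ * (c + c ^ 2 + 1) +
    4 * n₀ ^ 2 * (4 * n₀ * c * n + 1 + 2 * c * n + c + c ^ 2)

lemma exists_stepanov_parameters {n n₀ c q : ℕ} (hn₀ : 0 < n₀)
    (hq : stepanovThreshold n n₀ c ≤ q) :
    ∃ l m, n * (l + c * (2 * n)) < q ∧
      m + q * l + c + c * (n * q + c) + 1 < (m + 1) * n₀ * (l + 1) ∧
      2 * n₀ ^ 2 * (l + q * (m + c) + c * (2 * n + q * c)) ≤ q ^ 2 * (2 * n₀ + 1) := by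
  unfold stepanovThreshold at hq
  obtain ⟨l, hl⟩ : ∃ l, l = 4 * n₀ * c * n + 1 := ⟨_, rfl⟩
  obtain ⟨K, hK⟩ : ∃ K, K = c + c ^ 2 + 1 := ⟨_, rfl⟩
  rw [← hl, ← hK] at hq
  have hpos : 0 < n₀ * l := Nat.mul_pos hn₀ (by omega)
  obtain ⟨m, hm⟩ : ∃ m, m = (q * (l + c * n) + K) / (n₀ * l) := ⟨_, rfl⟩
  have hm_le : n₀ * l * m ≤ q * (l + c * n) + K := hm ▸ Nat.mul_div_le _ _
  have hm_lt : q * (l + c * n) + K < n₀ * l * (m + 1) := hm ▸ Nat.lt_mul_div_succ _ hpos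
  refine ⟨l, m, by omega, ?_, ?_⟩
  · calc m + q * l + c + c * (n * q + c) + 1 = q * (l + c * n) + K + m := by rw [hK]; ring
      _ < n₀ * l * (m + 1) + (m + 1) := by omega
      _ ≤ n₀ * l * (m + 1) + (m + 1) * n₀ := by gcongr; exact Nat.le_mul_of_pos_right _ hn₀
      _ = (m + 1) * n₀ * (l + 1) := by ring
  · refine le_of_mul_le_mul_left (a := 2 * l) ?_ (by omega)
    have hm_q : 4 * n₀ * q * (n₀ * l * m) ≤ 4 * n₀ * q * (q * (l + c * n) + K) :=
      Nat.mul_le_mul_left _ hm_le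
    have hl_q : 4 * n₀ * c * n * q ^ 2 ≤ l * q ^ 2 := Nat.mul_le_mul_right _ (by omega)
    have hq_q : l * q * (4 * n₀ * K + 4 * n₀ ^ 2 * (l + 2 * c * n + c + c ^ 2)) ≤ l * q * q :=
      Nat.mul_le_mul_left _ (by omega)
    have hK_l : 4 * n₀ * q * K ≤ l * (4 * n₀ * q * K) := Nat.le_mul_of_pos_left _ (by omega)
    have hl_l : 4 * n₀ ^ 2 * l * (l + 2 * c * n) ≤ q * (4 * n₀ ^ 2 * l * (l + 2 * c * n)) :=
      Nat.le_mul_of_pos_left _ (by omega)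
    nlinarith

theorem mul_card_le_of_frobenius_eq (hg : g.Monic) (hirr : Irreducible g)
    (hsep : SeparableAway g D) (hD : D ≠ 0) (hgc : InnerDegreeLE c g)
    (hv : ∀ j, BidegreeLE c (v j)) (hv' : ∀ j, BidegreeLE c (v' j))
    (hind : LinearIndependent k[X] fun j => AdjoinRoot.mk g (v j)) (hn₀ : 0 < n₀)
    (hq : stepanovThreshold g.natDegree n₀ c ≤ p ^ e)
    (S : Finset (k × k)) (hSx : ∀ P ∈ S, iterateFrobenius k p (2 * e) P.1 = P.1)
    (hSg : ∀ P ∈ S, bieval (RingHom.id k) P.1 P.2 g = 0)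
    (hSv : ∀ P ∈ S, ∃ u, ∀ j,
      iterateFrobenius k p (2 * e) (bieval (RingHom.id k) P.1 P.2 (v j)) =
        u * bieval (RingHom.id k) P.1 P.2 (v' j)) :
    2 * n₀ ^ 2 * S.card ≤ g.natDegree * ((p ^ e) ^ 2 * (2 * n₀ + 1)) := by
  obtain ⟨l, m, hl, hm, hlm⟩ := exists_stepanov_parameters hn₀ hq
  refine (Nat.mul_le_mul_left _ (card_le_of_frobenius_eq hg hirr hsep hD hgc hv hv' hind hl hm S
    hSx hSg hSv)).trans ?_
  rw [mul_left_comm]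
  exact Nat.mul_le_mul_left _ hlm

end Stepanov

/-! ### Points on curves over finite fields -/

section Minpoly

variable {R E : Type*} [CommRing R] [IsDomain R] [IsIntegrallyClosed R] [Field E]

lemma eval₂_eq_zero_iff_dvd_of_irreducible {φ : R →+* E} (hφ : Function.Injective φ) {z : E}
    {g : R[X]} (hg : g.Monic) (hirr : Irreducible g) (hz : g.eval₂ φ z = 0) (P : R[X]) :
    P.eval₂ φ z = 0 ↔ g ∣ P := by
  algebraize [φ]
  have : FaithfulSMul R E := (faithfulSMul_iff_algebraMap_injective R E).2 hφ
  have hinteg : IsIntegral R z := ⟨g, hg, hz⟩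
  have hdvd (Q : R[X]) : Q.eval₂ φ z = 0 ↔ minpoly R z ∣ Q :=
    minpoly.isIntegrallyClosed_dvd_iff hinteg Q
  have hassoc : Associated (minpoly R z) g :=
    (minpoly.irreducible hinteg).associated_of_dvd hirr ((hdvd g).1 hz)
  rw [hdvd, hassoc.dvd_iff_dvd_left]

end Minpoly

section CurvePoints

variable {k : Type*} [Field k] {g : k[X][Y]} {D : k[X]}

lemma exists_finset_iterateFrobenius_eq [IsAlgClosed k] (p : ℕ) [hp : Fact p.Prime] [CharP k p]
    {m : ℕ} (hm : m ≠ 0) :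
    ∃ F : Finset k, F.card = p ^ m ∧ ∀ x, x ∈ F ↔ iterateFrobenius k p m x = x := by
  classical
  have hlt : 1 < p ^ m := Nat.one_lt_pow hm hp.out.one_lt
  refine ⟨(X ^ p ^ m - X : k[X]).roots.toFinset, ?_, fun x => ?_⟩
  · rw [Multiset.toFinset_card_of_nodup
        (nodup_roots (galois_poly_separable p (p ^ m) (dvd_pow_self p hm))),
      IsAlgClosed.card_roots_eq_natDegree, FiniteField.X_pow_card_sub_X_natDegree_eq k hlt]
  · rw [Multiset.mem_toFinset, mem_roots (FiniteField.X_pow_card_sub_X_ne_zero k hlt)]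
    simp [sub_eq_zero, iterateFrobenius_def]

open Classical in
/-- The points of the curve `g = 0` with first coordinate in `F`. -/
noncomputable def curvePoints (g : k[X][Y]) (F : Finset k) : Finset (k × k) :=
  (F.sigma fun x => (g.map (evalRingHom x)).roots.toFinset).map
    (Equiv.sigmaEquivProd k k).toEmbedding

lemma mem_curvePoints (hg : g.Monic) {F : Finset k} {P : k × k} :
    P ∈ curvePoints g F ↔ P.1 ∈ F ∧ bieval (RingHom.id k) P.1 P.2 g = 0 := by
  simp only [curvePoints, Finset.mem_map_equiv, Finset.mem_sigma, Multiset.mem_toFinset,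
    mem_roots (hg.map _).ne_zero, IsRoot.def, bieval_eq_eval_map]
  rfl

lemma card_curvePoints_le (hg : g.Monic) (F : Finset k) :
    (curvePoints g F).card ≤ F.card * g.natDegree := by
  classical
  rw [curvePoints, Finset.card_map, Finset.card_sigma]
  refine Finset.sum_le_card_nsmul _ _ _ fun x _ => (Multiset.toFinset_card_le _).trans ?_
  exact (card_roots' _).trans (hg.natDegree_map _).le

lemma card_curvePoints [IsAlgClosed k] (hg : g.Monic) (hsep : SeparableAway g D) {F : Finset k}
    (hF : ∀ x ∈ F, D.eval x ≠ 0) : (curvePoints g F).card = F.card * g.natDegree := by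
  classical
  rw [curvePoints, Finset.card_map, Finset.card_sigma]
  refine Finset.sum_const_nat fun x hx => ?_
  have hnodup := nodup_roots ((hsep.map (evalRingHom x)).separable (hF x hx))
  rw [Multiset.toFinset_card_of_nodup hnodup, IsAlgClosed.card_roots_eq_natDegree, hg.natDegree_map]

lemma card_le_card_filter_eval_ne_zero [DecidableEq k] (hD : D ≠ 0) (F : Finset k) :
    F.card ≤ (F.filter fun x => D.eval x ≠ 0).card + D.natDegree := by
  rw [← Finset.card_filter_add_card_filter_not (s := F) fun x => D.eval x ≠ 0]
  refine Nat.add_le_add_left ((Finset.card_le_card fun x hx => ?_).trans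
    ((Multiset.toFinset_card_le D.roots).trans (card_roots' D))) _
  rw [Finset.mem_filter, not_not] at hx
  exact Multiset.mem_toFinset.2 ((mem_roots hD).2 hx.2)

end CurvePoints

/-- The defining polynomials of a plane curve `curve = 0`, of a function `num / den` on it, and of
the minimal polynomial of that function over the first coordinate line. -/
structure CurveFunction (R : Type*) [CommRing R] where
  curve : R[X][Y]
  den : R[X]
  num : R[X][Y]
  minpoly : R[X][Y]

namespace CurveFunction

/-- Change of the coefficient ring. -/
@[simps]
noncomputable def map {R S : Type*} [CommRing R] [CommRing S] (f : R →+* S) (Γ : CurveFunction R) :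
    CurveFunction S where
  curve := Γ.curve.map (mapRingHom f)
  den := Γ.den.map f
  num := Γ.num.map (mapRingHom f)
  minpoly := Γ.minpoly.map (mapRingHom f)

lemma map_comp_scaleRoots {R S : Type*} [CommRing R] [CommRing S] [Nontrivial S]
    {Γ : CurveFunction R} (hΓ : Γ.minpoly.Monic) (f : R →+* S) :
    ((Γ.map f).minpoly.scaleRoots (Γ.map f).den).comp (Γ.map f).num =
      ((Γ.minpoly.scaleRoots Γ.den).comp Γ.num).map (mapRingHom f) := by
  rw [map_comp, map_scaleRoots _ _ _ (by simp [hΓ.leadingCoeff])]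
  rfl

/-- The curve is irreducible and étale over the first coordinate line where `den ≠ 0`, and `minpoly`
is the minimal polynomial of `num / den`. -/
structure IsValid {R : Type*} [CommRing R] (Γ : CurveFunction R) : Prop where
  monic_curve : Γ.curve.Monic
  irreducible_curve : Irreducible Γ.curve
  den_ne_zero : Γ.den ≠ 0
  separableAway : SeparableAway Γ.curve Γ.den
  monic_minpoly : Γ.minpoly.Monic
  irreducible_minpoly : Irreducible Γ.minpoly
  dvd_comp : Γ.curve ∣ (Γ.minpoly.scaleRoots Γ.den).comp Γ.num

namespace IsValid

variable {R : Type*} [CommRing R] {Γ : CurveFunction R}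

lemma natDegree_curve_pos (hΓ : Γ.IsValid) : 0 < Γ.curve.natDegree :=
  Nat.pos_of_ne_zero fun h =>
    hΓ.irreducible_curve.ne_one (hΓ.monic_curve.natDegree_eq_zero.1 h)

lemma natDegree_minpoly_pos (hΓ : Γ.IsValid) : 0 < Γ.minpoly.natDegree :=
  Nat.pos_of_ne_zero fun h =>
    hΓ.irreducible_minpoly.ne_one (hΓ.monic_minpoly.natDegree_eq_zero.1 h)

lemma map {A W : Type*} [Field A] [IsAlgClosed A] [Field W] {Γ : CurveFunction A}
    (hΓ : Γ.IsValid) (f : A →+* W) : (Γ.map f).IsValid where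
  monic_curve := hΓ.monic_curve.map _
  irreducible_curve := irreducible_map_of_isAlgClosed f hΓ.monic_curve hΓ.irreducible_curve
  den_ne_zero := (Polynomial.map_ne_zero_iff f.injective).2 hΓ.den_ne_zero
  separableAway := hΓ.separableAway.map (mapRingHom f)
  monic_minpoly := hΓ.monic_minpoly.map _
  irreducible_minpoly := irreducible_map_of_isAlgClosed f hΓ.monic_minpoly hΓ.irreducible_minpoly
  dvd_comp := map_comp_scaleRoots hΓ.monic_minpoly f ▸ Polynomial.map_dvd _ hΓ.dvd_comp

end IsValid

variable {k : Type*} [Field k] (Γ : CurveFunction k)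

/-- The point `(x, y)` lies on the étale part of the curve. -/
def IsPoint (x y : k) : Prop :=
  bieval (RingHom.id k) x y Γ.curve = 0 ∧ Γ.den.eval x ≠ 0

/-- The value at `(x, y)` of the function `P / den`. -/
noncomputable def quot (P : k[X][Y]) (x y : k) : k :=
  bieval (RingHom.id k) x y P / Γ.den.eval x

/-- Over the fixed points of `ρ`, the values of the functions `h t / den` cover the values of
`num / den` twisted by `ρ`. -/
def IsCovered {ι : Type*} (ρ : k →+* k) (h : ι → k[X][Y]) : Prop :=
  ∀ x y, ρ x = x → Γ.IsPoint x y → ∃ t, ρ (Γ.quot Γ.num x y) = Γ.quot (h t) x y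

/-- Frobenius-twisted points: `(x, y)` has `ρ x = x`, and `ρ` acts on the value of `num / den` there
as `h` prescribes. -/
def IsTwistedPoint (ρ : k →+* k) (h : k[X][Y]) (x y : k) : Prop :=
  ρ x = x ∧ Γ.IsPoint x y ∧ ρ (Γ.quot Γ.num x y) = Γ.quot h x y

/-- The polynomial `den ^ (n - 1) (num / den) ^ j`, where `n` is the degree of `num / den`. -/
noncomputable def powNum (F : k[X][Y]) (j : Fin Γ.minpoly.natDegree) : k[X][Y] :=
  F ^ j.val * C Γ.den ^ (Γ.minpoly.natDegree - 1 - j)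

lemma bieval_comp_scaleRoots {R W : Type*} [CommRing R] [Field W] (i : R →+* W) {x : W} (y : W)
    (P F : R[X][Y]) {D : R[X]} (hD : D.eval₂ i x ≠ 0) :
    bieval i x y ((P.scaleRoots D).comp F) =
      D.eval₂ i x ^ P.natDegree * bieval i x (bieval i x y F / D.eval₂ i x) P := by
  have hcomp : (bieval i x y).comp C = eval₂RingHom i x := RingHom.ext fun a => bieval_C i x y a
  have := scaleRoots_eval₂_mul (p := P) (eval₂RingHom i x) (bieval i x y F / D.eval₂ i x) D
  rw [coe_eval₂RingHom, mul_div_cancel₀ _ hD] at this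
  rw [comp, hom_eval₂, hcomp, this]
  rfl

lemma bieval_powNum {W : Type*} [Field W] (i : k →+* W) {x : W} (y : W)
    (hD : Γ.den.eval₂ i x ≠ 0) (F : k[X][Y]) (j : Fin Γ.minpoly.natDegree) :
    bieval i x y (Γ.powNum F j) =
      Γ.den.eval₂ i x ^ (Γ.minpoly.natDegree - 1) * (bieval i x y F / Γ.den.eval₂ i x) ^ j.val := by
  have hj : Γ.minpoly.natDegree - 1 = Γ.minpoly.natDegree - 1 - j + j := by omega
  rw [powNum, map_mul, map_pow, map_pow, bieval_C, div_pow, mul_div_left_comm]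
  conv_rhs => rw [hj, pow_add, mul_div_cancel_right₀ _ (pow_ne_zero _ hD)]

lemma bidegreeLE_powNum {c : ℕ} {F : k[X][Y]} (hF : BidegreeLE c F) (hD : Γ.den.natDegree ≤ c)
    (j : Fin Γ.minpoly.natDegree) : BidegreeLE (c * (Γ.minpoly.natDegree + 1)) (Γ.powNum F j) := by
  refine ((hF.pow _).mul ((BidegreeLE.C hD).pow _)).mono ?_
  rw [← add_mul, mul_comm]
  exact Nat.mul_le_mul_left _ (by omega)

lemma exists_map_powNum_eq_mul {ρ : k →+* k} {h : k[X][Y]} {x y : k}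
    (hxy : Γ.IsTwistedPoint ρ h x y) : ∃ u, ∀ j,
      ρ (bieval (RingHom.id k) x y (Γ.powNum Γ.num j)) =
        u * bieval (RingHom.id k) x y (Γ.powNum h j) := by
  obtain ⟨-, ⟨-, hD⟩, hw⟩ := hxy
  refine ⟨ρ (Γ.den.eval x ^ (Γ.minpoly.natDegree - 1)) /
    Γ.den.eval x ^ (Γ.minpoly.natDegree - 1), fun j => ?_⟩
  rw [bieval_powNum _ _ _ hD, bieval_powNum _ _ _ hD, ← mul_assoc, map_mul, map_pow _ (_ / _)]
  exact congrArg₂ _ (div_mul_cancel₀ _ (pow_ne_zero _ hD)).symm (congrArg (· ^ j.val) hw)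

lemma linearIndependent_powNum (hΓ : Γ.IsValid) (p : ℕ) [Fact p.Prime] [CharP k p] :
    LinearIndependent k[X] fun j => AdjoinRoot.mk Γ.curve (Γ.powNum Γ.num j) := by
  classical
  obtain ⟨E, _, i, x, y, -, hE⟩ := exists_functionField p hΓ.monic_curve hΓ.irreducible_curve
    hΓ.separableAway hΓ.den_ne_zero
  have hx : Function.Injective (eval₂RingHom i x) := by
    refine (injective_iff_map_eq_zero _).2 fun F hF => by_contra fun hne => ?_
    have hdvd := (hE (C F)).1 ((bieval_C i x y F).trans hF)
    have hdeg := natDegree_le_of_dvd hdvd (C_ne_zero.2 hne)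
    rw [natDegree_C, Nat.le_zero, hΓ.monic_curve.natDegree_eq_zero] at hdeg
    exact hΓ.irreducible_curve.ne_one hdeg
  have hD : Γ.den.eval₂ i x ≠ 0 := (map_ne_zero_iff (eval₂RingHom i x) hx).2 hΓ.den_ne_zero
  set w := bieval i x y Γ.num / Γ.den.eval₂ i x
  have hw : bieval i x w Γ.minpoly = 0 := by
    have := (hE _).2 hΓ.dvd_comp
    rw [bieval_comp_scaleRoots i y _ _ hD] at this
    exact (mul_eq_zero.1 this).resolve_left (pow_ne_zero _ hD)
  refine Fintype.linearIndependent_iff.2 fun a ha => ?_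
  have hmk : AdjoinRoot.mk Γ.curve (∑ j, C (a j) * Γ.powNum Γ.num j) = 0 := by
    simpa only [map_sum, map_mul, AdjoinRoot.mk_C, ← AdjoinRoot.algebraMap_eq,
      ← Algebra.smul_def] using ha
  have hsum := (hE _).2 (AdjoinRoot.mk_eq_zero.1 hmk)
  have hofFn : bieval i x w (ofFn _ a) = 0 := by
    refine (mul_eq_zero.1 ?_).resolve_left (pow_ne_zero (Γ.minpoly.natDegree - 1) hD)
    rw [← hsum]
    simp only [ofFn_eq_sum_monomial, ← C_mul_X_pow_eq_monomial, map_sum, map_mul, map_pow, bieval_C,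
      bieval_X, bieval_powNum _ _ _ hD, Finset.mul_sum, w]
    exact Finset.sum_congr rfl fun j _ => mul_left_comm _ _ _
  have hdvd := (eval₂_eq_zero_iff_dvd_of_irreducible hx hΓ.monic_minpoly hΓ.irreducible_minpoly hw
    _).1 hofFn
  have hzero := eq_zero_of_dvd_of_degree_lt hdvd
    ((ofFn_degree_lt a).trans_eq (degree_eq_natDegree hΓ.monic_minpoly.ne_zero).symm)
  exact congrFun (injective_ofFn _ (hzero.trans (ofFn_zero _).symm))

end CurveFunction

lemma lt_of_twisted_point_count {n n₀ c G q : ℕ} (hn : 0 < n) (hn₀ : 0 < n₀) (hG : q ^ 2 ≤ G + c)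
    (hcount : 2 * n₀ ^ 2 * (G * n) ≤
      2 * n₀ ^ 2 * (q * n) + (n₀ - 1) * (n * (q ^ 2 * (2 * n₀ + 1)))) :
    q < 2 * n₀ ^ 2 * (1 + c) + 1 := by
  obtain ⟨r, rfl⟩ : ∃ r, n₀ = r + 1 := ⟨n₀ - 1, by omega⟩
  by_contra! hq
  have hcount' : 2 * (r + 1) ^ 2 * G ≤ 2 * (r + 1) ^ 2 * q + r * (q ^ 2 * (2 * (r + 1) + 1)) := by
    refine Nat.le_of_mul_le_mul_left ?_ hn
    rw [Nat.add_sub_cancel] at hcount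
    linarith
  have hGmul := Nat.mul_le_mul_left (2 * (r + 1) ^ 2) hG
  have hqmul := Nat.mul_le_mul_right q hq
  have hcmul : 2 * (r + 1) ^ 2 * c ≤ 2 * (r + 1) ^ 2 * c * q := Nat.le_mul_of_pos_right _ (by omega)
  nlinarith

namespace CurveFunction

variable {k : Type*} [Field k] [IsAlgClosed k] {p : ℕ} [Fact p.Prime] [CharP k p]
  (Γ : CurveFunction k) {c e : ℕ} {h : k[X][Y]}

lemma mul_card_le_of_isTwistedPoint (hΓ : Γ.IsValid) (hgc : InnerDegreeLE c Γ.curve)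
    (hDc : Γ.den.natDegree ≤ c) (hF : BidegreeLE c Γ.num) (hh : BidegreeLE c h)
    (hq : stepanovThreshold Γ.curve.natDegree Γ.minpoly.natDegree
      (c * (Γ.minpoly.natDegree + 1)) ≤ p ^ e)
    (S : Finset (k × k)) (hS : ∀ P ∈ S, Γ.IsTwistedPoint (iterateFrobenius k p (2 * e)) h P.1 P.2) :
    2 * Γ.minpoly.natDegree ^ 2 * S.card ≤
      Γ.curve.natDegree * ((p ^ e) ^ 2 * (2 * Γ.minpoly.natDegree + 1)) :=
  mul_card_le_of_frobenius_eq hΓ.monic_curve hΓ.irreducible_curve hΓ.separableAway hΓ.den_ne_zero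
    (hgc.mono (Nat.le_mul_of_pos_right _ (Nat.succ_pos _))) (Γ.bidegreeLE_powNum hF hDc)
    (Γ.bidegreeLE_powNum hh hDc) (Γ.linearIndependent_powNum hΓ p) hΓ.natDegree_minpoly_pos hq S
    (fun P hP => (hS P hP).1) (fun P hP => (hS P hP).2.1.1)
    (fun P hP => Γ.exists_map_powNum_eq_mul (hS P hP))

/-- The bound on `q` beyond which every twisted point condition holds outside the field of `q`
elements, for curves of degree `n` and functions of degree `n₀` defined by polynomials of degree at
most `c`. -/
def twistThreshold (n n₀ c : ℕ) : ℕ :=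
  max (stepanovThreshold n n₀ (c * (n₀ + 1))) (2 * n₀ ^ 2 * (1 + c) + 1)

/- The curve has about `n q²` points over `𝔽_{q²}`. Each of the `n₀` twisted conditions holds at
about `n q² / n₀` of them at most, and they cover everything; a condition that held only over `𝔽_q`
would account for `n q` points, leaving a gap. -/
theorem exists_isTwistedPoint (hΓ : Γ.IsValid) {ι : Type*} [Fintype ι]
    (hι : Fintype.card ι = Γ.minpoly.natDegree)
    {h : ι → k[X][Y]} (hgc : InnerDegreeLE c Γ.curve) (hDc : Γ.den.natDegree ≤ c)
    (hF : BidegreeLE c Γ.num) (hh : ∀ t, BidegreeLE c (h t)) (he : e ≠ 0)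
    (hq : twistThreshold Γ.curve.natDegree Γ.minpoly.natDegree c ≤ p ^ e)
    (hcov : Γ.IsCovered (iterateFrobenius k p (2 * e)) h) (t : ι) :
    ∃ x y, Γ.IsTwistedPoint (iterateFrobenius k p (2 * e)) (h t) x y ∧
      iterateFrobenius k p e x ≠ x := by
  classical
  by_contra! hfix
  obtain ⟨hq₁, hq₂⟩ := max_le_iff.1 hq
  obtain ⟨Q, hQcard, hQ⟩ := exists_finset_iterateFrobenius_eq (k := k) p (m := 2 * e) (by omega)
  obtain ⟨q, hqcard, hqmem⟩ := exists_finset_iterateFrobenius_eq (k := k) p he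
  set G := Q.filter fun x => Γ.den.eval x ≠ 0
  let S (s : ι) := (curvePoints Γ.curve G).filter fun P =>
    Γ.IsTwistedPoint (iterateFrobenius k p (2 * e)) (h s) P.1 P.2
  have hmem {P} (hP : P ∈ curvePoints Γ.curve G) :
      iterateFrobenius k p (2 * e) P.1 = P.1 ∧ Γ.IsPoint P.1 P.2 := by
    rw [mem_curvePoints hΓ.monic_curve, Finset.mem_filter, hQ] at hP
    exact ⟨hP.1.1, hP.2, hP.1.2⟩
  have hcover : curvePoints Γ.curve G ⊆ Finset.univ.biUnion S := fun P hP => by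
    obtain ⟨s, hs⟩ := hcov _ _ (hmem hP).1 (hmem hP).2
    exact Finset.mem_biUnion.2 ⟨s, Finset.mem_univ s,
      Finset.mem_filter.2 ⟨hP, (hmem hP).1, (hmem hP).2, hs⟩⟩
  have hSt : (S t).card ≤ p ^ e * Γ.curve.natDegree := by
    rw [← hqcard]
    refine (Finset.card_le_card fun P hP => ?_).trans (card_curvePoints_le hΓ.monic_curve q)
    have hP' := (Finset.mem_filter.1 hP).2
    exact (mem_curvePoints hΓ.monic_curve).2 ⟨(hqmem _).2 (hfix _ _ hP'), hP'.2.1.1⟩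
  have hSs (s) := Γ.mul_card_le_of_isTwistedPoint hΓ hgc hDc hF (hh s) hq₁ (S s)
    fun P hP => (Finset.mem_filter.1 hP).2
  refine (lt_of_twisted_point_count hΓ.natDegree_curve_pos hΓ.natDegree_minpoly_pos
    (c := c) (G := G.card) ?_ ?_).not_ge hq₂
  · rw [← pow_mul, mul_comm, ← hQcard]
    exact (card_le_card_filter_eval_ne_zero hΓ.den_ne_zero Q).trans (Nat.add_le_add_left hDc _)
  · rw [← card_curvePoints hΓ.monic_curve hΓ.separableAway fun x hx => (Finset.mem_filter.1 hx).2]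
    refine (Nat.mul_le_mul_left _ ((Finset.card_le_card hcover).trans
      Finset.card_biUnion_le)).trans ?_
    rw [← Finset.add_sum_erase _ _ (Finset.mem_univ t), mul_add, Finset.mul_sum]
    refine add_le_add (Nat.mul_le_mul_left _ hSt)
      ((Finset.sum_le_card_nsmul _ _ _ fun s _ => hSs s).trans ?_)
    rw [Finset.card_erase_of_mem (Finset.mem_univ t), Finset.card_univ, hι, smul_eq_mul]

end CurveFunction

/-! ### Ultraproducts of fields -/

section EventualVanishing

lemma map_eq_zero_iff_forall_mem_support {R S : Type*} [CommRing R] [CommRing S] (f : R →+* S)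
    (P : R[X]) : P.map f = 0 ↔ ∀ j ∈ P.support, f (P.coeff j) = 0 := by
  refine ⟨fun hP j _ => by rw [← coeff_map, hP, coeff_zero], fun hP => ext fun j => ?_⟩
  by_cases hj : j ∈ P.support
  · rw [coeff_map, hP j hj, coeff_zero]
  · rw [coeff_map, notMem_support_iff.1 hj, map_zero, coeff_zero]

variable {ι R S : Type*} [CommRing R] [CommRing S] {R' : ι → Type*} [∀ i, CommRing (R' i)]
  {l : Filter ι} {f : R →+* S} {g : ∀ i, R →+* R' i}

lemma map_eq_zero_iff_eventually (h : ∀ a, f a = 0 ↔ ∀ᶠ i in l, g i a = 0) (P : R[X]) :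
    P.map f = 0 ↔ ∀ᶠ i in l, P.map (g i) = 0 := by
  simp only [map_eq_zero_iff_forall_mem_support, h, eventually_all_finset]

end EventualVanishing

namespace Ultraproduct

variable {ι : Type*} (U : Ultrafilter ι) (K : ι → Type*) [∀ i, Field (K i)]

/-- The ideal of the sequences that vanish almost everywhere. -/
def nullIdeal : Ideal (∀ i, K i) where
  carrier := {f | ∀ᶠ i in (U : Filter ι), f i = 0}
  add_mem' ha hb := by filter_upwards [ha, hb] with i hai hbi using by simp [hai, hbi]
  zero_mem' := Eventually.of_forall fun _ => rfl
  smul_mem' c x hx := by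
    filter_upwards [hx] with i hi
    rw [smul_eq_mul, Pi.mul_apply, hi, mul_zero]

instance nullIdeal_isMaximal : (nullIdeal U K).IsMaximal := by
  classical
  refine Ideal.isMaximal_iff.2 ⟨fun h => ?_, fun J x hJ hx hxJ => ?_⟩
  · obtain ⟨i, hi⟩ := Eventually.exists h
    exact one_ne_zero hi
  · have hx' : ∀ᶠ i in (U : Filter ι), x i ≠ 0 := Ultrafilter.eventually_not.2 hx
    have hsupp : (fun i => if x i = 0 then 1 else 0 : ∀ i, K i) ∈ J :=
      hJ (hx'.mono fun i hi => if_neg hi)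
    convert J.add_mem hsupp (J.mul_mem_left x⁻¹ hxJ) using 1
    funext i
    by_cases h : x i = 0 <;> simp [h]

end Ultraproduct

/-- The ultraproduct of the fields `K i` along the ultrafilter `U`. -/
abbrev Ultraproduct {ι : Type*} (U : Ultrafilter ι) (K : ι → Type*) [∀ i, Field (K i)] : Type _ :=
  (∀ i, K i) ⧸ Ultraproduct.nullIdeal U K

namespace Ultraproduct

section Field

variable {ι : Type*} (U : Ultrafilter ι) (K : ι → Type*) [∀ i, Field (K i)]

noncomputable instance : Field (Ultraproduct U K) := Ideal.Quotient.field _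

/-- The class of a sequence in the ultraproduct. -/
noncomputable abbrev ofSeq : (∀ i, K i) →+* Ultraproduct U K :=
  Ideal.Quotient.mk (nullIdeal U K)

lemma ofSeq_surjective : Function.Surjective (ofSeq U K) := Ideal.Quotient.mk_surjective

variable {U K}

lemma ofSeq_eq_zero_iff {f : ∀ i, K i} : ofSeq U K f = 0 ↔ ∀ᶠ i in (U : Filter ι), f i = 0 :=
  Ideal.Quotient.eq_zero_iff_mem

lemma ofSeq_eq_iff {f g : ∀ i, K i} :
    ofSeq U K f = ofSeq U K g ↔ ∀ᶠ i in (U : Filter ι), f i = g i := by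
  rw [← sub_eq_zero, ← map_sub, ofSeq_eq_zero_iff]
  simp only [Pi.sub_apply, sub_eq_zero]

lemma ofSeq_ne_iff {f g : ∀ i, K i} :
    ofSeq U K f ≠ ofSeq U K g ↔ ∀ᶠ i in (U : Filter ι), f i ≠ g i := by
  rw [Ne, ofSeq_eq_iff, Ultrafilter.eventually_not]

lemma ofSeq_div (a b : ∀ i, K i) : ofSeq U K a / ofSeq U K b = ofSeq U K fun i => a i / b i := by
  by_cases hb : ofSeq U K b = 0
  · rw [hb, div_zero, eq_comm, ofSeq_eq_zero_iff]
    filter_upwards [ofSeq_eq_zero_iff.1 hb] with i hi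
    rw [hi, div_zero]
  · rw [div_eq_iff hb, ← map_mul, ofSeq_eq_iff]
    filter_upwards [Ultrafilter.eventually_not.2 fun h => hb (ofSeq_eq_zero_iff.2 h)] with i hi
    rw [Pi.mul_apply, div_mul_cancel₀ _ hi]

instance [∀ i, IsAlgClosed (K i)] : IsAlgClosed (Ultraproduct U K) := by
  refine IsAlgClosed.of_exists_root _ fun P hP hirr => ?_
  obtain ⟨Q, rfl, hQdeg, hQ⟩ := lifts_and_natDegree_eq_and_monic
    ((lifts_iff_coeff_lifts P).2 fun n => ofSeq_surjective U K _) hP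
  have hroot (i) : ∃ x : K i, (Q.map (Pi.evalRingHom K i)).eval x = 0 := by
    refine IsAlgClosed.exists_root _ fun h => ?_
    have hdeg := natDegree_eq_of_degree_eq_some h
    rw [hQ.natDegree_map, hQdeg] at hdeg
    exact hirr.ne_one (hP.natDegree_eq_zero.1 hdeg)
  choose x hx using hroot
  refine ⟨ofSeq U K x, ?_⟩
  rw [eval_map, eval₂_hom, ofSeq_eq_zero_iff]
  refine Eventually.of_forall fun i => ?_
  rw [← hx i, eval_map]
  exact (eval₂_hom (Pi.evalRingHom K i) x).symm

/-- The homomorphism of ultraproducts induced by homomorphisms of the factors. -/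
noncomputable def map {L : ι → Type*} [∀ i, Field (L i)] (r : ∀ i, K i →+* L i) :
    Ultraproduct U K →+* Ultraproduct U L :=
  Ideal.quotientMap _ (RingHom.pi fun i => (r i).comp (Pi.evalRingHom K i)) fun f hf => by
    filter_upwards [hf] with i hi
    exact (congrArg (r i) hi).trans (map_zero (r i))

lemma map_ofSeq {L : ι → Type*} [∀ i, Field (L i)] (r : ∀ i, K i →+* L i) (f : ∀ i, K i) :
    map r (ofSeq U K f) = ofSeq U L fun i => r i (f i) := rfl

end Field

section Polynomial

variable {ι : Type*} {U : Ultrafilter ι} {K : ι → Type*} [∀ i, Field (K i)]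

lemma polynomial_map_eq_zero_iff (P : (∀ i, K i)[X]) :
    P.map (ofSeq U K) = 0 ↔ ∀ᶠ i in (U : Filter ι), P.map (Pi.evalRingHom K i) = 0 :=
  map_eq_zero_iff_eventually (fun _ => ofSeq_eq_zero_iff) P

lemma bivariate_map_eq_zero_iff (P : (∀ i, K i)[X][Y]) :
    P.map (mapRingHom (ofSeq U K)) = 0 ↔
      ∀ᶠ i in (U : Filter ι), P.map (mapRingHom (Pi.evalRingHom K i)) = 0 :=
  map_eq_zero_iff_eventually polynomial_map_eq_zero_iff P

lemma exists_bivariate_lift (P : (Ultraproduct U K)[X][Y]) :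
    ∃ Q : (∀ i, K i)[X][Y], Q.map (mapRingHom (ofSeq U K)) = P :=
  (mem_lifts P).1 (mem_lifts_mapRingHom _ P fun _ _ _ => ofSeq_surjective U K _)

lemma exists_monic_lift {P : (Ultraproduct U K)[X][Y]} (hP : P.Monic) :
    ∃ Q : (∀ i, K i)[X][Y], Q.Monic ∧ Q.map (mapRingHom (ofSeq U K)) = P := by
  obtain ⟨Q, hQ, -, hmonic⟩ := lifts_and_natDegree_eq_and_monic
    (mem_lifts_mapRingHom _ P fun _ _ _ => ofSeq_surjective U K _) hP
  exact ⟨Q, hmonic, hQ⟩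

lemma bieval_ofSeq (P : (∀ i, K i)[X][Y]) (x y : ∀ i, K i) :
    bieval (RingHom.id _) (ofSeq U K x) (ofSeq U K y) (P.map (mapRingHom (ofSeq U K))) =
      ofSeq U K fun i => bieval (RingHom.id _) (x i) (y i)
        (P.map (mapRingHom (Pi.evalRingHom K i))) := by
  have hseq : (fun i => bieval (RingHom.id _) (x i) (y i)
      (P.map (mapRingHom (Pi.evalRingHom K i)))) = bieval (RingHom.id _) x y P := funext fun i => by
    rw [bieval_map]
    exact (map_bieval (RingHom.id _) (Pi.evalRingHom K i) x y P).symm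
  rw [hseq, bieval_map]
  exact (map_bieval (RingHom.id _) (ofSeq U K) x y P).symm

lemma eval_ofSeq (P : (∀ i, K i)[X]) (x : ∀ i, K i) :
    (P.map (ofSeq U K)).eval (ofSeq U K x) =
      ofSeq U K fun i => (P.map (Pi.evalRingHom K i)).eval (x i) := by
  have hseq : (fun i => (P.map (Pi.evalRingHom K i)).eval (x i)) = P.eval x := funext fun i => by
    rw [eval_map]
    exact eval₂_hom (Pi.evalRingHom K i) x
  rw [hseq, eval_map, eval₂_hom]

lemma map_dvd_map_iff {A P : (∀ i, K i)[X][Y]} (hA : A.Monic) :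
    A.map (mapRingHom (ofSeq U K)) ∣ P.map (mapRingHom (ofSeq U K)) ↔
      ∀ᶠ i in (U : Filter ι), A.map (mapRingHom (Pi.evalRingHom K i)) ∣
        P.map (mapRingHom (Pi.evalRingHom K i)) := by
  simp only [← modByMonic_eq_zero_iff_dvd (hA.map _), ← map_modByMonic _ hA,
    bivariate_map_eq_zero_iff]

lemma eventually_separableAway {g : (∀ i, K i)[X][Y]} {D : (∀ i, K i)[X]}
    (h : SeparableAway (g.map (mapRingHom (ofSeq U K))) (D.map (ofSeq U K))) :
    ∀ᶠ i in (U : Filter ι), SeparableAway (g.map (mapRingHom (Pi.evalRingHom K i)))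
      (D.map (Pi.evalRingHom K i)) := by
  obtain ⟨a, b, hab⟩ := Ideal.mem_span_pair.1 h
  obtain ⟨a, rfl⟩ := exists_bivariate_lift a
  obtain ⟨b, rfl⟩ := exists_bivariate_lift b
  have hzero : (a * g + b * derivative g - C D).map (mapRingHom (ofSeq U K)) = 0 := by
    simpa only [Polynomial.map_sub, Polynomial.map_add, Polynomial.map_mul, ← derivative_map, map_C,
      coe_mapRingHom, sub_eq_zero] using hab
  filter_upwards [(bivariate_map_eq_zero_iff _).1 hzero] with i hi
  refine Ideal.mem_span_pair.2 ⟨a.map (mapRingHom (Pi.evalRingHom K i)),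
    b.map (mapRingHom (Pi.evalRingHom K i)), ?_⟩
  simpa only [Polynomial.map_sub, Polynomial.map_add, Polynomial.map_mul, ← derivative_map, map_C,
    coe_mapRingHom, sub_eq_zero] using hi

end Polynomial

end Ultraproduct

section DegreeBounds

variable {R : Type*} [CommRing R]

lemma coeff_coeff_swap (P : R[X][Y]) (a b : ℕ) :
    ((Bivariate.swap P).coeff a).coeff b = (P.coeff b).coeff a := by
  induction P using Polynomial.induction_on' with
  | add p q hp hq => simp only [map_add, coeff_add, hp, hq]
  | monomial n f =>
    induction f using Polynomial.induction_on' with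
    | add p q hp hq => simp only [map_add, coeff_add, hp, hq]
    | monomial m r =>
      rw [Bivariate.swap_monomial_monomial]
      by_cases hm : m = a <;> by_cases hn : n = b <;> simp [hm, hn, coeff_monomial]

lemma innerDegreeLE_iff_natDegree_swap_le {s : ℕ} {P : R[X][Y]} :
    InnerDegreeLE s P ↔ (Bivariate.swap P).natDegree ≤ s := by
  simp only [InnerDegreeLE, natDegree_le_iff_coeff_eq_zero, Polynomial.ext_iff (q := 0),
    coeff_coeff_swap, coeff_zero]
  exact ⟨fun h N hN b => h b N hN, fun h b N hN => h N hN b⟩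

lemma InnerDegreeLE.of_dvd [IsDomain R] {s : ℕ} {P Q : R[X][Y]} (hQ : InnerDegreeLE s Q)
    (hne : Q ≠ 0) (h : P ∣ Q) : InnerDegreeLE s P := by
  rw [innerDegreeLE_iff_natDegree_swap_le] at hQ ⊢
  exact (natDegree_le_of_dvd (_root_.map_dvd Bivariate.swap h)
    (EmbeddingLike.map_ne_zero_iff.2 hne)).trans hQ

lemma eventually_bidegreeLE (P : R[X][Y]) : ∀ᶠ c in atTop, BidegreeLE c P := by
  filter_upwards [eventually_ge_atTop (Bivariate.swap P).natDegree,
    eventually_ge_atTop P.natDegree] with c h₁ h₂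
  exact ⟨innerDegreeLE_iff_natDegree_swap_le.2 h₁, h₂⟩

lemma BidegreeLE.map {S : Type*} [CommRing S] {c : ℕ} {P : R[X][Y]} (hP : BidegreeLE c P)
    (f : R →+* S) : BidegreeLE c (P.map (mapRingHom f)) :=
  ⟨hP.1.map f, natDegree_map_le.trans hP.2⟩

end DegreeBounds

section PiLift

variable {ι : Type*} {K : ι → Type*} [∀ i, CommRing (K i)]

lemma exists_map_evalRingHom_eq {c : ℕ} {a : ∀ i, (K i)[X]} (ha : ∀ i, (a i).natDegree ≤ c) :
    ∃ A : (∀ i, K i)[X], ∀ i, A.map (Pi.evalRingHom K i) = a i := by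
  refine ⟨∑ j ∈ Finset.range (c + 1), C (fun i => (a i).coeff j) * X ^ j, fun i => ?_⟩
  conv_rhs => rw [(a i).as_sum_range_C_mul_X_pow' (Nat.lt_succ_iff.2 (ha i))]
  simp [Polynomial.map_sum]

lemma exists_monic_map_evalRingHom_eq {c d : ℕ} {a : ∀ i, (K i)[X][Y]} (hmonic : ∀ i, (a i).Monic)
    (hdeg : ∀ i, (a i).natDegree = d) (hc : ∀ i, InnerDegreeLE c (a i)) :
    ∃ A : (∀ i, K i)[X][Y], A.Monic ∧ ∀ i, A.map (mapRingHom (Pi.evalRingHom K i)) = a i := by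
  choose B hB using fun j => exists_map_evalRingHom_eq fun i => hc i j
  refine ⟨X ^ d + ∑ j ∈ Finset.range d, C (B j) * X ^ j, monic_X_pow_add ?_, fun i => ?_⟩
  · refine (degree_sum_le _ _).trans_lt
      ((Finset.sup_lt_iff (WithBot.bot_lt_coe d)).2 fun j hj => ?_)
    exact (degree_C_mul_X_pow_le j (B j)).trans_lt (Nat.cast_lt.2 (Finset.mem_range.1 hj))
  · rw [(hmonic i).as_sum, hdeg]
    simp [Polynomial.map_sum, hB]

end PiLift

namespace Ultraproduct

variable {ι : Type*} {U : Ultrafilter ι} {K : ι → Type*} [∀ i, Field (K i)]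

lemma exists_monic_dvd {P : (∀ i, K i)[X][Y]} (hP : P.Monic) {d : ℕ}
    (h : ∀ᶠ i in (U : Filter ι), ∃ a : (K i)[X][Y], a.Monic ∧ a.natDegree = d ∧
      a ∣ P.map (mapRingHom (Pi.evalRingHom K i))) :
    ∃ A : (∀ i, K i)[X][Y], A.Monic ∧ A.natDegree = d ∧
      A.map (mapRingHom (ofSeq U K)) ∣ P.map (mapRingHom (ofSeq U K)) := by
  obtain ⟨c, hc⟩ := (eventually_bidegreeLE P).exists
  have hfactor (i) : ∃ a : (K i)[X][Y], (a.Monic ∧ a.natDegree = d ∧ InnerDegreeLE c a) ∧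
      ((∃ b : (K i)[X][Y], b.Monic ∧ b.natDegree = d ∧
        b ∣ P.map (mapRingHom (Pi.evalRingHom K i))) →
        a ∣ P.map (mapRingHom (Pi.evalRingHom K i))) := by
    by_cases hi : ∃ b : (K i)[X][Y], b.Monic ∧ b.natDegree = d ∧
        b ∣ P.map (mapRingHom (Pi.evalRingHom K i))
    · obtain ⟨b, hb, hd, hdvd⟩ := hi
      exact ⟨b, ⟨hb, hd, (hc.1.map _).of_dvd (hP.map _).ne_zero hdvd⟩, fun _ => hdvd⟩
    · exact ⟨X ^ d, ⟨monic_X_pow d, natDegree_X_pow d, InnerDegreeLE.X_pow d⟩,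
        fun h => absurd h hi⟩
  choose a ha hdvd using hfactor
  obtain ⟨A, hA, hAi⟩ := exists_monic_map_evalRingHom_eq (fun i => (ha i).1) (fun i => (ha i).2.1)
    fun i => (ha i).2.2
  refine ⟨A, hA, ?_, (map_dvd_map_iff hA).2 ?_⟩
  · obtain ⟨i, -⟩ := h.exists
    rw [← (ha i).2.1, ← hAi i, hA.natDegree_map]
  · filter_upwards [h] with i hi
    exact (hAi i).symm ▸ hdvd i hi

lemma eventually_irreducible {P : (∀ i, K i)[X][Y]} (hP : P.Monic)
    (hirr : Irreducible (P.map (mapRingHom (ofSeq U K)))) :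
    ∀ᶠ i in (U : Filter ι), Irreducible (P.map (mapRingHom (Pi.evalRingHom K i))) := by
  by_contra hred
  have hne : P.natDegree ≠ 0 := fun h =>
    hirr.ne_one ((hP.map _).natDegree_eq_zero.1 ((hP.natDegree_map _).trans h))
  have hfactor : ∀ᶠ i in (U : Filter ι), ∃ d ∈ Finset.Ioc 0 (P.natDegree / 2), ∃ a : (K i)[X][Y],
      a.Monic ∧ a.natDegree = d ∧ a ∣ P.map (mapRingHom (Pi.evalRingHom K i)) := by
    filter_upwards [Ultrafilter.eventually_not.2 hred] with i hi
    rw [(hP.map _).irreducible_iff_lt_natDegree_lt (fun h => hne (by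
      rw [← hP.natDegree_map (mapRingHom (Pi.evalRingHom K i)), h, natDegree_one]))] at hi
    push Not at hi
    obtain ⟨a, ha, hd, hdvd⟩ := hi
    rw [hP.natDegree_map] at hd
    exact ⟨_, hd, a, ha, rfl, hdvd⟩
  obtain ⟨d, hd, hfactor⟩ :=
    (Ultrafilter.eventually_exists_mem_iff (Finset.finite_toSet _)).1 hfactor
  obtain ⟨A, hA, hAd, hdvd⟩ := exists_monic_dvd hP hfactor
  refine (Monic.irreducible_iff_lt_natDegree_lt (hP.map _) hirr.ne_one).1 hirr _ (hA.map _) ?_ hdvd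
  rwa [hA.natDegree_map, hAd, hP.natDegree_map]

end Ultraproduct

namespace Ultraproduct

section CurveFunction

variable {ι : Type*} {U : Ultrafilter ι} {K : ι → Type*} [∀ i, Field (K i)]

lemma exists_curveFunction_lift {Γ : CurveFunction (Ultraproduct U K)} (hΓ : Γ.IsValid) :
    ∃ Γ' : CurveFunction (∀ i, K i), Γ'.curve.Monic ∧ Γ'.minpoly.Monic ∧
      Γ'.map (ofSeq U K) = Γ := by
  obtain ⟨g, hg, hg'⟩ := exists_monic_lift hΓ.monic_curve
  obtain ⟨m, hm, hm'⟩ := exists_monic_lift hΓ.monic_minpoly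
  obtain ⟨F, hF⟩ := exists_bivariate_lift Γ.num
  obtain ⟨D, hD⟩ := map_surjective _ (ofSeq_surjective U K) Γ.den
  refine ⟨⟨g, D, F, m⟩, hg, hm, ?_⟩
  cases Γ
  simp only [CurveFunction.map, hg', hD, hF, hm']

variable {Γ : CurveFunction (∀ i, K i)}

lemma eventually_isValid (hcurve : Γ.curve.Monic) (hminpoly : Γ.minpoly.Monic)
    (hΓ : (Γ.map (ofSeq U K)).IsValid) :
    ∀ᶠ i in (U : Filter ι), (Γ.map (Pi.evalRingHom K i)).IsValid := by
  have hdvd := hΓ.dvd_comp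
  have hden := hΓ.den_ne_zero
  rw [CurveFunction.map_comp_scaleRoots hminpoly, CurveFunction.map_curve,
    map_dvd_map_iff hcurve] at hdvd
  rw [CurveFunction.map_den, Ne, polynomial_map_eq_zero_iff, ← Ultrafilter.eventually_not] at hden
  filter_upwards [eventually_irreducible hcurve hΓ.irreducible_curve, hden,
    eventually_separableAway hΓ.separableAway,
    eventually_irreducible hminpoly hΓ.irreducible_minpoly, hdvd] with i h₁ h₂ h₃ h₄ h₅
  exact ⟨hcurve.map _, h₁, h₂, h₃, hminpoly.map _, h₄,  by
    rwa [CurveFunction.map_comp_scaleRoots hminpoly]⟩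

lemma isPoint_ofSeq_iff (x y : ∀ i, K i) :
    (Γ.map (ofSeq U K)).IsPoint (ofSeq U K x) (ofSeq U K y) ↔
      ∀ᶠ i in (U : Filter ι), (Γ.map (Pi.evalRingHom K i)).IsPoint (x i) (y i) := by
  simp only [CurveFunction.IsPoint, CurveFunction.map, bieval_ofSeq, eval_ofSeq, ofSeq_eq_zero_iff,
    ne_eq, ← Ultrafilter.eventually_not, eventually_and]

lemma quot_ofSeq (P : (∀ i, K i)[X][Y]) (x y : ∀ i, K i) :
    (Γ.map (ofSeq U K)).quot (P.map (mapRingHom (ofSeq U K))) (ofSeq U K x) (ofSeq U K y) =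
      ofSeq U K fun i => (Γ.map (Pi.evalRingHom K i)).quot
        (P.map (mapRingHom (Pi.evalRingHom K i))) (x i) (y i) := by
  simp only [CurveFunction.quot, CurveFunction.map, bieval_ofSeq, eval_ofSeq, ofSeq_div]

lemma isTwistedPoint_ofSeq_iff (r : ∀ i, K i →+* K i) (P : (∀ i, K i)[X][Y]) (x y : ∀ i, K i) :
    (Γ.map (ofSeq U K)).IsTwistedPoint (map r) (P.map (mapRingHom (ofSeq U K)))
        (ofSeq U K x) (ofSeq U K y) ↔
      ∀ᶠ i in (U : Filter ι), (Γ.map (Pi.evalRingHom K i)).IsTwistedPoint (r i)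
        (P.map (mapRingHom (Pi.evalRingHom K i))) (x i) (y i) := by
  simp only [CurveFunction.IsTwistedPoint, isPoint_ofSeq_iff, CurveFunction.map_num, quot_ofSeq,
    map_ofSeq, ofSeq_eq_iff, eventually_and]

lemma eventually_isCovered {r : ∀ i, K i →+* K i} {τ : Type*}
    {h : τ → (∀ i, K i)[X][Y]}
    (hcov : (Γ.map (ofSeq U K)).IsCovered (map r) fun t => (h t).map (mapRingHom (ofSeq U K))) :
    ∀ᶠ i in (U : Filter ι), (Γ.map (Pi.evalRingHom K i)).IsCovered (r i)
      fun t => (h t).map (mapRingHom (Pi.evalRingHom K i)) := by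
  by_contra hfail
  have hbad : ∀ᶠ i in (U : Filter ι), ∃ P : K i × K i, r i P.1 = P.1 ∧
      (Γ.map (Pi.evalRingHom K i)).IsPoint P.1 P.2 ∧
      ∀ t, ¬ (Γ.map (Pi.evalRingHom K i)).IsTwistedPoint (r i)
        ((h t).map (mapRingHom (Pi.evalRingHom K i))) P.1 P.2 := by
    filter_upwards [Ultrafilter.eventually_not.2 hfail] with i hi
    simp only [CurveFunction.IsCovered, not_forall, not_exists] at hi
    obtain ⟨x, y, hx, hxy, hne⟩ := hi
    exact ⟨(x, y), hx, hxy, fun t ht => hne t ht.2.2⟩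
  obtain ⟨P, hP⟩ := skolem.1 hbad
  obtain ⟨hfix, hpoint, hne⟩ := by simpa only [eventually_and] using hP
  have hfix' : map r (ofSeq U K fun i => (P i).1) = ofSeq U K fun i => (P i).1 :=
    ofSeq_eq_iff.2 hfix
  have hpoint' := (isPoint_ofSeq_iff _ _).2 hpoint
  obtain ⟨t, ht⟩ := hcov _ _ hfix' hpoint'
  obtain ⟨i, hi, hi'⟩ :=
    (((isTwistedPoint_ofSeq_iff r _ _ _).1 ⟨hfix', hpoint', ht⟩).and hne).exists
  exact hi' t hi

end CurveFunction

end Ultraproduct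

/-- Every way in which `ρ` can act on a function on a curve over the fixed points of `ρ` occurs at
a point whose first coordinate is not fixed by `κ`. -/
def HasTwistedPoints {W : Type*} [Field W] (ρ κ : W →+* W) : Prop :=
  ∀ Γ : CurveFunction W, Γ.IsValid → ∀ (τ : Type) [Fintype τ],
    Fintype.card τ = Γ.minpoly.natDegree → ∀ h : τ → W[X][Y], Γ.IsCovered ρ h →
    ∀ t, ∃ x y, Γ.IsTwistedPoint ρ (h t) x y ∧ κ x ≠ x

namespace Ultraproduct

theorem hasTwistedPoints {ι : Type*} {U : Ultrafilter ι} {K : ι → Type*} [∀ i, Field (K i)]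
    [∀ i, IsAlgClosed (K i)] (p e : ι → ℕ) [∀ i, Fact (p i).Prime] [∀ i, CharP (K i) (p i)]
    (he : ∀ i, e i ≠ 0) (hlim : ∀ N, ∀ᶠ i in (U : Filter ι), N ≤ p i ^ e i) :
    HasTwistedPoints (map (U := U) fun i => iterateFrobenius (K i) (p i) (2 * e i))
      (map fun i => iterateFrobenius (K i) (p i) (e i)) := by
  intro Γ hΓ τ _ hτ h hcov t
  obtain ⟨Γ, hcurve, hminpoly, rfl⟩ := exists_curveFunction_lift hΓ
  choose h hh using fun t => exists_bivariate_lift (h t)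
  obtain rfl := funext hh
  obtain ⟨c, hgc, hFc, hhc, hDc⟩ := ((eventually_bidegreeLE Γ.curve).and
    ((eventually_bidegreeLE Γ.num).and ((eventually_all.2 fun t => eventually_bidegreeLE (h t)).and
      (eventually_ge_atTop Γ.den.natDegree)))).exists
  have htwisted : ∀ᶠ i in (U : Filter ι), ∃ P : K i × K i,
      (Γ.map (Pi.evalRingHom K i)).IsTwistedPoint (iterateFrobenius (K i) (p i) (2 * e i))
        ((h t).map (mapRingHom (Pi.evalRingHom K i))) P.1 P.2 ∧
      iterateFrobenius (K i) (p i) (e i) P.1 ≠ P.1 := by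
    filter_upwards [eventually_isValid hcurve hminpoly hΓ, eventually_isCovered hcov,
      hlim (CurveFunction.twistThreshold Γ.curve.natDegree Γ.minpoly.natDegree c)] with
        i hvalid hcov' hq
    obtain ⟨x, y, hxy⟩ := CurveFunction.exists_isTwistedPoint (Γ.map (Pi.evalRingHom K i)) hvalid
      (by rw [hτ, CurveFunction.map_minpoly, hminpoly.natDegree_map, CurveFunction.map_minpoly,
        hminpoly.natDegree_map]) (hgc.map _).1 (natDegree_map_le.trans hDc) (hFc.map _)
      (fun t => (hhc t).map _) (he i)
      (by rwa [CurveFunction.map_minpoly, hminpoly.natDegree_map, CurveFunction.map_curve,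
        hcurve.natDegree_map]) hcov' t
    exact ⟨(x, y), hxy⟩
  obtain ⟨P, hP⟩ := skolem.1 htwisted
  obtain ⟨hP, hne⟩ := eventually_and.1 hP
  exact ⟨_, _, (isTwistedPoint_ofSeq_iff _ _ _ _).2 hP, ofSeq_ne_iff.2 hne⟩

end Ultraproduct

lemma exists_isSeparable_forall_mem_adjoin {K W : Type*} [Field K] [Field W] [Algebra K W]
    (S : Finset W) (hS : ∀ s ∈ S, IsSeparable K s) :
    ∃ z : W, IsSeparable K z ∧ ∀ s ∈ S, s ∈ IntermediateField.adjoin K {z} := by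
  let L := IntermediateField.adjoin K (S : Set W)
  have : Algebra.IsSeparable K L := (IntermediateField.isSeparable_adjoin_iff_isSeparable K W).2 hS
  have : FiniteDimensional K L :=
    IntermediateField.finiteDimensional_adjoin fun s hs => (hS s hs).isIntegral
  obtain ⟨z, hz⟩ := Field.exists_primitive_element K L
  refine ⟨z, (Algebra.IsSeparable.isSeparable K z).map L.val L.val.injective, fun s hs => ?_⟩
  rw [← IntermediateField.lift_adjoin_simple, hz, IntermediateField.lift_top]
  exact IntermediateField.subset_adjoin K _ hs

section SeparableOver

variable {R W : Type*} [CommRing R] [Field W]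

/-- The element `s` is a root of a polynomial over `R` that is separable over the fraction field of
`R`. -/
def IsSeparableOver (φ : R →+* W) (s : W) : Prop :=
  ∃ (G : R[X]) (D : R), D ≠ 0 ∧ G.eval₂ φ s = 0 ∧ SeparableAway G D

/-- Algebraicity over the image of a ring homomorphism, without an `Algebra` instance. -/
def IsAlgebraicOver (φ : R →+* W) (s : W) : Prop :=
  ∃ G : R[X], G ≠ 0 ∧ G.eval₂ φ s = 0

variable [IsDomain R]

lemma exists_map_eq_C_mul {K : Type*} [Field K] [Algebra R K] [IsFractionRing R K] (P : K[X]) :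
    ∃ (Q : R[X]) (d : R), d ≠ 0 ∧ Q.map (algebraMap R K) = C (algebraMap R K d) * P := by
  obtain ⟨b, hb, h⟩ := IsLocalization.integerNormalization_spec (nonZeroDivisors R) P
  refine ⟨_, b, nonZeroDivisors.ne_zero hb, h.trans ?_⟩
  rw [← smul_eq_C_mul, algebraMap_smul]

lemma exists_separableAway {K : Type*} [Field K] [Algebra R K] [IsFractionRing R K] {g : R[X]}
    (hg : (g.map (algebraMap R K)).Separable) : ∃ D, D ≠ 0 ∧ SeparableAway g D := by
  obtain ⟨a, b, hab⟩ := hg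
  obtain ⟨a', d, hd, ha⟩ := exists_map_eq_C_mul (R := R) a
  obtain ⟨b', e, he, hb⟩ := exists_map_eq_C_mul (R := R) b
  refine ⟨d * e, mul_ne_zero hd he, Ideal.mem_span_pair.2 ⟨C e * a', C d * b', ?_⟩⟩
  apply map_injective _ (IsFractionRing.injective R K)
  simp only [Polynomial.map_add, Polynomial.map_mul, map_C, ← derivative_map, ha, hb, map_mul]
  linear_combination C (algebraMap R K d) * C (algebraMap R K e) * hab

section FractionField

variable {K : Type*} [Field K] [Algebra R K] [IsFractionRing R K] [Algebra K W] [Algebra R W]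
  [IsScalarTower R K W]

lemma isSeparableOver_algebraMap_iff (s : W) :
    IsSeparableOver (algebraMap R W) s ↔ IsSeparable K s := by
  constructor
  · rintro ⟨G, D, hD, hG, hsep⟩
    have hD' : algebraMap R K D ≠ 0 := by
      rwa [Ne, map_eq_zero_iff _ (IsFractionRing.injective R K)]
    refine ((hsep.map (algebraMap R K)).separable hD').of_dvd (minpoly.dvd K s ?_)
    rwa [aeval_map_algebraMap, aeval_def]
  · intro hs
    obtain ⟨G, d, hd, hG⟩ := exists_map_eq_C_mul (R := R) (minpoly K s)
    have hd' : algebraMap R K d ≠ 0 := by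
      rwa [Ne, map_eq_zero_iff _ (IsFractionRing.injective R K)]
    obtain ⟨D, hD, hsep⟩ := exists_separableAway (R := R) (K := K) (g := G)
      (by rw [hG]; exact Separable.unit_mul (isUnit_C.2 hd'.isUnit) hs)
    refine ⟨G, D, hD, ?_, hsep⟩
    rw [← aeval_def, ← aeval_map_algebraMap K, hG, map_mul, minpoly.aeval, mul_zero]

lemma exists_isIntegral_isSeparable_forall_mem_adjoin (S : Finset W)
    (hS : ∀ s ∈ S, IsSeparable K s) :
    ∃ z : W, IsIntegral R z ∧ IsSeparable K z ∧ ∀ s ∈ S, s ∈ IntermediateField.adjoin K {z} := by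
  obtain ⟨z, hz, hSz⟩ := exists_isSeparable_forall_mem_adjoin S hS
  obtain ⟨⟨b, hb⟩, hbz⟩ :=
    IsIntegral.exists_multiple_integral_of_isLocalization (nonZeroDivisors R) z hz.isIntegral
  have hb' : algebraMap R K b ≠ 0 := IsFractionRing.to_map_ne_zero_of_mem_nonZeroDivisors hb
  have hbz' : b • z = algebraMap R K b • z := (algebraMap_smul K b z).symm
  refine ⟨b • z, hbz, ?_, fun s hs => ?_⟩
  · rw [hbz', ← mem_separableClosure_iff]
    exact (separableClosure K W).smul_mem (mem_separableClosure_iff.2 hz)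
  · refine (IntermediateField.adjoin_simple_le_iff (F := K)).2 ?_ (hSz s hs)
    simpa only [hbz', inv_smul_smul₀ hb'] using IntermediateField.smul_mem _
      (IntermediateField.mem_adjoin_simple_self K (b • z)) (x := (algebraMap R K b)⁻¹)

lemma exists_eval₂_eq_mul_of_mem_adjoin {z s : W} (hz : IsIntegral K z)
    (hs : s ∈ IntermediateField.adjoin K {z}) :
    ∃ (P : R[X]) (d : R), d ≠ 0 ∧ P.eval₂ (algebraMap R W) z = algebraMap R W d * s := by
  rw [← IntermediateField.mem_toSubalgebra,
    IntermediateField.adjoin_simple_toSubalgebra_of_isAlgebraic hz.isAlgebraic,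
    Algebra.adjoin_singleton_eq_range_aeval] at hs
  obtain ⟨P, rfl⟩ := hs
  obtain ⟨Q, d, hd, hQ⟩ := exists_map_eq_C_mul (R := R) P
  refine ⟨Q, d, hd, ?_⟩
  rw [← aeval_def, ← aeval_map_algebraMap K, hQ, map_mul, aeval_C,
    ← IsScalarTower.algebraMap_apply]
  rfl

end FractionField

variable {φ : R →+* W}

theorem exists_primitive_element_of_isSeparableOver [IsIntegrallyClosed R]
    (hφ : Function.Injective φ) (S : Finset W) (hS : ∀ s ∈ S, IsSeparableOver φ s) {D' : R}
    (hD' : D' ≠ 0) :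
    ∃ (z : W) (g : R[X]) (D : R), g.Monic ∧ Irreducible g ∧ g.eval₂ φ z = 0 ∧ D ≠ 0 ∧ D' ∣ D ∧
      SeparableAway g D ∧ ∀ s ∈ S, ∃ P : R[X], s = P.eval₂ φ z / φ D := by
  algebraize [φ]
  have : FaithfulSMul R W := (faithfulSMul_iff_algebraMap_injective R W).2 hφ
  let K := FractionRing R
  let _ : Algebra K W := FractionRing.liftAlgebra R W
  obtain ⟨z, hzR, hzK, hSz⟩ := exists_isIntegral_isSeparable_forall_mem_adjoin (R := R) (K := K) S
    fun s hs => (isSeparableOver_algebraMap_iff s).1 (hS s hs)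
  have hsep : ((minpoly R z).map (algebraMap R K)).Separable :=
    minpoly.isIntegrallyClosed_eq_field_fractions' K hzR ▸ hzK
  obtain ⟨E, hE, hEsep⟩ := exists_separableAway hsep
  choose! P d hd hP using fun s hs =>
    exists_eval₂_eq_mul_of_mem_adjoin (R := R) hzK.isIntegral (hSz s hs)
  have hD : D' * E * ∏ s ∈ S, d s ≠ 0 :=
    mul_ne_zero (mul_ne_zero hD' hE) (Finset.prod_ne_zero_iff.2 hd)
  refine ⟨z, minpoly R z, D' * E * ∏ s ∈ S, d s, minpoly.monic hzR, minpoly.irreducible hzR,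
    minpoly.aeval R z, hD, ⟨E * ∏ s ∈ S, d s, mul_assoc ..⟩, ?_, fun s hs => ?_⟩
  · rw [SeparableAway, mul_right_comm, map_mul]
    exact Ideal.mul_mem_left _ _ hEsep
  · obtain ⟨e, he⟩ := Finset.dvd_prod_of_mem d hs
    refine ⟨C (D' * E * e) * P s, ?_⟩
    rw [eq_div_iff ((map_ne_zero_iff φ hφ).2 hD), eval₂_mul, eval₂_C, he]
    simp only [map_mul]
    linear_combination - φ D' * φ E * φ e * hP s hs

lemma IsAlgebraicOver.exists_isSeparableOver_pow (q : ℕ) [ExpChar W q] (hφ : Function.Injective φ)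
    {s : W} (hs : IsAlgebraicOver φ s) : ∃ m, ∀ n, m ≤ n → IsSeparableOver φ (s ^ q ^ n) := by
  algebraize [φ]
  have : FaithfulSMul R W := (faithfulSMul_iff_algebraMap_injective R W).2 hφ
  let K := FractionRing R
  let _ : Algebra K W := FractionRing.liftAlgebra R W
  have : ExpChar K q := (RingHom.expChar_iff _ (algebraMap K W).injective q).2 inferInstance
  obtain ⟨G, hG, hGs⟩ := hs
  have hinteg : IsIntegral K s := (isAlgebraic_iff_isIntegral).1 <|
    (IsFractionRing.isAlgebraic_iff R K W).1 ⟨G, hG, hGs⟩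
  obtain ⟨f, hf, m, hm⟩ := (minpoly.irreducible hinteg).hasSeparableContraction q
  have hsep : IsSeparable K (s ^ q ^ m) := by
    refine hf.of_dvd (minpoly.dvd K _ ?_)
    rw [← expand_aeval, hm, minpoly.aeval]
  refine ⟨m, fun n hn => (isSeparableOver_algebraMap_iff (K := K) _).2 ?_⟩
  obtain ⟨l, rfl⟩ := Nat.exists_eq_add_of_le hn
  rw [pow_add, pow_mul, ← mem_separableClosure_iff]
  exact pow_mem (mem_separableClosure_iff.2 hsep) _

end SeparableOver

section Graphs

variable {A V W : Type*} [Field A] [Field V] [Field W] {i : A →+* V} {j : A →+* W}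

/-- `B` is the graph of a ring homomorphism from a subring of `V` to `W`. -/
def IsGraph (B : Subring (V × W)) : Prop :=
  ∀ w, ((0 : V), w) ∈ B → w = 0

/-- The pairs of fractions `(E N / E M, E' N / E' M)` with `E' M ≠ 0`. -/
def fractionPairs {R : Type*} [CommRing R] (E : R →+* V) (E' : R →+* W) : Subring (V × W) where
  carrier := {w | ∃ N M, E' M ≠ 0 ∧ w.1 * E M = E N ∧ w.2 * E' M = E' N}
  zero_mem' := ⟨0, 1, by simp, by simp, by simp⟩
  one_mem' := ⟨1, 1, by simp, by simp, by simp⟩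
  neg_mem' := by
    rintro w ⟨N, M, hM, h, h'⟩
    exact ⟨-N, M, hM, by simp [h], by simp [h']⟩
  mul_mem' := by
    rintro w w' ⟨N, M, hM, h, h'⟩ ⟨N₁, M₁, hM₁, h₁, h₁'⟩
    refine ⟨N * N₁, M * M₁, by simp [hM, hM₁], ?_, ?_⟩
    · rw [map_mul, map_mul, ← h, ← h₁, Prod.fst_mul, mul_mul_mul_comm]
    · rw [map_mul, map_mul, ← h', ← h₁', Prod.snd_mul, mul_mul_mul_comm]
  add_mem' := by
    rintro w w' ⟨N, M, hM, h, h'⟩ ⟨N₁, M₁, hM₁, h₁, h₁'⟩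
    refine ⟨N * M₁ + N₁ * M, M * M₁, by simp [hM, hM₁], ?_, ?_⟩
    · rw [map_add, map_mul, map_mul, map_mul, ← h, ← h₁, Prod.fst_add]; ring
    · rw [map_add, map_mul, map_mul, map_mul, ← h', ← h₁', Prod.snd_add]; ring

section FractionPairs

variable {R : Type*} [CommRing R] {E : R →+* V} {E' : R →+* W}

lemma mk_mem_fractionPairs (N : R) : (E N, E' N) ∈ fractionPairs E E' :=
  ⟨N, 1, by simp, by simp, by simp⟩

lemma isGraph_fractionPairs (hker : ∀ N, E N = 0 → E' N = 0) : IsGraph (fractionPairs E E') := by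
  rintro w ⟨N, M, hM, h, h'⟩
  rw [zero_mul] at h
  rw [hker N h.symm] at h'
  exact (mul_eq_zero.1 h').resolve_right hM

lemma div_mem_fractionPairs (hker : ∀ N, E N = 0 → E' N = 0) {v v' : V} {w w' : W}
    (h : (v, w) ∈ fractionPairs E E') (h' : (v', w') ∈ fractionPairs E E') (hw' : w' ≠ 0) :
    (v / v', w / w') ∈ fractionPairs E E' := by
  obtain ⟨N, M, hM, hv, hw⟩ := h
  obtain ⟨N', M', hM', hv'', hw''⟩ := h'
  simp only at hv hw hv'' hw''
  have hN' : E' N' ≠ 0 := hw'' ▸ mul_ne_zero hw' hM'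
  have hv' : v' ≠ 0 := by
    rintro rfl
    rw [zero_mul] at hv''
    exact hN' (hker N' hv''.symm)
  refine ⟨N * M', M * N', by rw [map_mul]; exact mul_ne_zero hM hN', ?_, ?_⟩
  · rw [map_mul, map_mul, ← hv, ← hv'']; field_simp
  · rw [map_mul, map_mul, ← hw, ← hw'']; field_simp

end FractionPairs

variable {B : Subring (V × W)} {c : V} {d : W}

lemma bieval_mem_graph (hij : ∀ a, (i a, j a) ∈ B) (hc : (c, d) ∈ B) {z : V} {z' : W}
    (hz : (z, z') ∈ B) (P : A[X][Y]) : (bieval i c z P, bieval j d z' P) ∈ B := by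
  let b : B := bieval ((i.prod j).codRestrict B hij) ⟨(c, d), hc⟩ ⟨(z, z'), hz⟩ P
  have hfst : b.1.1 = bieval i c z P := map_bieval _ ((RingHom.fst V W).comp B.subtype) ..
  have hsnd : b.1.2 = bieval j d z' P := map_bieval _ ((RingHom.snd V W).comp B.subtype) ..
  exact hfst ▸ hsnd ▸ b.2

lemma map_eq_prod_of_isGraph (hB : IsGraph B) (hij : ∀ a, (i a, j a) ∈ B) (hc : (c, d) ∈ B)
    {τ : Type*} [Fintype τ] {y : τ → V} {y' : τ → W} (hy : ∀ t, (y t, y' t) ∈ B) (P : A[X][Y])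
    (hP : P.map (eval₂RingHom i c) = ∏ t, (X - C (y t))) :
    P.map (eval₂RingHom j d) = ∏ t, (X - C (y' t)) := by
  let p₁ : B →+* V := (RingHom.fst V W).comp B.subtype
  let p₂ : B →+* W := (RingHom.snd V W).comp B.subtype
  let f : A →+* B := (i.prod j).codRestrict B hij
  have hp₁ : Function.Injective p₁ := by
    refine (injective_iff_map_eq_zero p₁).2 ?_
    rintro ⟨⟨v, w⟩, h⟩ (rfl : v = 0)
    exact Subtype.ext (Prod.ext rfl (hB w h))
  have heval₁ : p₁.comp (eval₂RingHom f ⟨(c, d), hc⟩) = eval₂RingHom i c :=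
    ringHom_ext (fun a => by simp [p₁, f, RingHom.codRestrict]) (by simp [p₁])
  have heval₂ : p₂.comp (eval₂RingHom f ⟨(c, d), hc⟩) = eval₂RingHom j d :=
    ringHom_ext (fun a => by simp [p₂, f, RingHom.codRestrict]) (by simp [p₂])
  have hPB : P.map (eval₂RingHom f ⟨(c, d), hc⟩) = ∏ t, (X - C (⟨(y t, y' t), hy t⟩ : B)) := by
    apply map_injective p₁ hp₁
    simp only [Polynomial.map_map, heval₁, hP, Polynomial.map_prod, Polynomial.map_sub, map_X,
      map_C]
    rfl
  have := congrArg (Polynomial.map p₂) hPB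
  simp only [Polynomial.map_map, heval₂, Polynomial.map_prod, Polynomial.map_sub, map_X,
    map_C] at this
  exact this

end Graphs

section Specialization

variable {A W : Type*} [Field A] [Field W] {ρ κ : W →+* W} {r : A →+* A} {i j : A →+* W} {c : W}

lemma map_bieval_of_comp_eq (hi : ρ.comp i = i.comp r) (x y : W) (P : A[X][Y]) :
    ρ (bieval i x y P) = bieval i (ρ x) (ρ y) (P.map (mapRingHom r)) := by
  rw [map_bieval, bieval_map, hi]

lemma map_eval₂_of_comp_eq (hi : ρ.comp i = i.comp r) (x : W) (P : A[X]) :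
    ρ (P.eval₂ i x) = (P.map r).eval₂ i (ρ x) := by
  rw [hom_eval₂, eval₂_map, hi]

lemma bieval_eq_zero_iff_dvd (hc : Function.Injective (eval₂RingHom i c)) {g : A[X][Y]}
    (hg : g.Monic) (hirr : Irreducible g) {z : W} (hz : bieval i c z g = 0) (P : A[X][Y]) :
    bieval i c z P = 0 ↔ g ∣ P :=
  eval₂_eq_zero_iff_dvd_of_irreducible hc hg hirr hz P

lemma exists_eq_prod_X_sub_C [IsAlgClosed W] {P : W[X]} (hP : P.Monic) :
    ∃ (n : ℕ) (y : Fin n → W), P.natDegree = n ∧ P = ∏ t, (X - C (y t)) := by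
  have hsplits := IsAlgClosed.splits P
  refine ⟨P.roots.toList.length, P.roots.toList.get, ?_, ?_⟩
  · rw [Multiset.length_toList, hsplits.natDegree_eq_card_roots]
  · conv_lhs => rw [hsplits.eq_prod_roots_of_monic hP, ← Multiset.coe_toList P.roots]
    rw [Multiset.map_coe, Multiset.prod_coe, ← List.prod_ofFn]
    congr 1
    exact List.ext_get (by simp) (by simp)

lemma eval₂_mem_fractionPairs {x y z : W} (P : A[X]) :
    (P.eval₂ i c, P.eval₂ j x) ∈ fractionPairs (bieval i c z) (bieval j x y) := by
  simpa only [bieval_C] using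
    mk_mem_fractionPairs (E := bieval i c z) (E' := bieval j x y) (C P)

lemma map_mem_fractionPairs {x y z : W} (a : A) :
    (i a, j a) ∈ fractionPairs (bieval i c z) (bieval j x y) := by
  simpa only [eval₂_C] using eval₂_mem_fractionPairs (i := i) (j := j) (C a)

lemma fst_mem_fractionPairs {x y z : W} :
    (c, x) ∈ fractionPairs (bieval i c z) (bieval j x y) := by
  simpa only [eval₂_X] using eval₂_mem_fractionPairs (i := i) (j := j) (X : A[X])

namespace CurveFunction

variable {Γ : CurveFunction A}

lemma isPoint_map_iff {x y : W} :
    (Γ.map j).IsPoint x y ↔ bieval j x y Γ.curve = 0 ∧ Γ.den.eval₂ j x ≠ 0 := by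
  rw [IsPoint, map_curve, map_den, bieval_map, eval_map, RingHom.id_comp]

lemma quot_map (P : A[X][Y]) (x y : W) :
    (Γ.map j).quot (P.map (mapRingHom j)) x y = bieval j x y P / Γ.den.eval₂ j x := by
  rw [quot, map_den, bieval_map, eval_map, RingHom.id_comp]

lemma exists_of_isSeparableOver (hc : Function.Injective (eval₂RingHom i c)) {m : A[X][Y]}
    (hm : m.Monic) (hirr : Irreducible m) {w : W} (hw : bieval i c w m = 0)
    (hsep : IsSeparableOver (eval₂RingHom i c) w) {τ : Type*} [Finite τ] (y : τ → W)
    (hy : ∀ t, IsSeparableOver (eval₂RingHom i c) (y t)) {D : A[X]} (hD : D ≠ 0) :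
    ∃ (Γ : CurveFunction A) (z : W) (h : τ → A[X][Y]), Γ.IsValid ∧ Γ.minpoly = m ∧ D ∣ Γ.den ∧
      bieval i c z Γ.curve = 0 ∧ w = bieval i c z Γ.num / Γ.den.eval₂ i c ∧
      ∀ t, y t = bieval i c z (h t) / Γ.den.eval₂ i c := by
  classical
  have := Fintype.ofFinite τ
  obtain ⟨z, g, E, hg, hgirr, hz, hE, hDE, hgsep, hfrac⟩ :=
    exists_primitive_element_of_isSeparableOver hc (insert w (Finset.univ.image y))
      (by simpa using ⟨hsep, hy⟩) hD
  obtain ⟨F, hF⟩ := hfrac w (Finset.mem_insert_self _ _)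
  choose h hh using fun t => hfrac (y t)
    (Finset.mem_insert_of_mem (Finset.mem_image_of_mem _ (Finset.mem_univ t)))
  have hdvd : g ∣ (m.scaleRoots E).comp F := by
    rw [← bieval_eq_zero_iff_dvd hc hg hgirr hz, bieval_comp_scaleRoots i z m F
      ((map_ne_zero_iff _ hc).2 hE)]
    exact mul_eq_zero_of_right _ (hF ▸ hw)
  exact ⟨⟨g, E, F, m⟩, z, h, ⟨hg, hgirr, hE, hgsep, hm, hirr, hdvd⟩, rfl, hDE, hz, hF, hh⟩

section Point

variable {x y z : W}

lemma bieval_eq_zero_of_isPoint (hΓ : Γ.IsValid) (hc : Function.Injective (eval₂RingHom i c))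
    (hz : bieval i c z Γ.curve = 0) (hxy : (Γ.map j).IsPoint x y) (N : A[X][Y])
    (hN : bieval i c z N = 0) : bieval j x y N = 0 := by
  obtain ⟨M, rfl⟩ :=
    (bieval_eq_zero_iff_dvd hc hΓ.monic_curve hΓ.irreducible_curve hz N).1 hN
  rw [map_mul, (isPoint_map_iff.1 hxy).1, zero_mul]

lemma quot_mem_fractionPairs (hΓ : Γ.IsValid) (hc : Function.Injective (eval₂RingHom i c))
    (hz : bieval i c z Γ.curve = 0) (hxy : (Γ.map j).IsPoint x y) (P : A[X][Y]) :
    (bieval i c z P / Γ.den.eval₂ i c, (Γ.map j).quot (P.map (mapRingHom j)) x y) ∈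
      fractionPairs (bieval i c z) (bieval j x y) := by
  rw [quot_map]
  exact div_mem_fractionPairs (bieval_eq_zero_of_isPoint hΓ hc hz hxy) (mk_mem_fractionPairs P)
    (eval₂_mem_fractionPairs Γ.den) (isPoint_map_iff.1 hxy).2

lemma isCovered_map (hΓ : Γ.IsValid) (hc : Function.Injective (eval₂RingHom i c))
    (hz : bieval i c z Γ.curve = 0) (hj : ρ.comp j = j.comp r) {τ : Type*} [Fintype τ]
    {h : τ → A[X][Y]}
    (hroots : (Γ.minpoly.map (mapRingHom r)).map (eval₂RingHom i c) =
      ∏ t, (X - C (bieval i c z (h t) / Γ.den.eval₂ i c))) :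
    (Γ.map j).IsCovered ρ fun t => (h t).map (mapRingHom j) := by
  intro x y hx hxy
  have hroot : bieval j x ((Γ.map j).quot (Γ.map j).num x y) Γ.minpoly = 0 := by
    obtain ⟨M, hM⟩ := hΓ.dvd_comp
    have := bieval_comp_scaleRoots j y Γ.minpoly Γ.num (isPoint_map_iff.1 hxy).2
    rw [hM, map_mul, (isPoint_map_iff.1 hxy).1, zero_mul, zero_eq_mul] at this
    rw [map_num, quot_map]
    exact this.resolve_left (pow_ne_zero _ (isPoint_map_iff.1 hxy).2)
  have hconj : bieval j x (ρ ((Γ.map j).quot (Γ.map j).num x y)) (Γ.minpoly.map (mapRingHom r)) =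
      0 := by
    have := map_bieval_of_comp_eq hj x ((Γ.map j).quot (Γ.map j).num x y) Γ.minpoly
    rwa [hroot, map_zero, hx, eq_comm] at this
  have hprod := map_eq_prod_of_isGraph
    (isGraph_fractionPairs (bieval_eq_zero_of_isPoint hΓ hc hz hxy))
    map_mem_fractionPairs fst_mem_fractionPairs
    (fun t => quot_mem_fractionPairs hΓ hc hz hxy (h t)) _ hroots
  rw [bieval_eq_eval_map, hprod, eval_prod, Finset.prod_eq_zero_iff] at hconj
  obtain ⟨t, -, ht⟩ := hconj
  exact ⟨t, by simpa [sub_eq_zero] using ht⟩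

end Point

end CurveFunction

end Specialization

section Specialization

variable {A W : Type*} [Field A] [Field W] {ρ κ : W →+* W} {r : A →+* A} {i j : A →+* W} {c : W}

/-- Some homomorphism to `W` from a subring of `W`, encoded by its graph `B`, extends the
correspondence between `i` and `j`, commutes with `ρ` on `S`, and sends `c` to a point that `ρ`
fixes but `κ` does not. -/
def HasSpecialization (ρ κ : W →+* W) (i j : A →+* W) (c : W) (S : Finset W) : Prop :=
  ∃ B : Subring (W × W), IsGraph B ∧ (∀ a, (i a, j a) ∈ B) ∧
    (∃ d, (c, d) ∈ B ∧ ρ d = d ∧ κ d ≠ d) ∧ ∀ s ∈ S, ∃ t, (s, t) ∈ B ∧ (ρ s, ρ t) ∈ B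

lemma IsSeparableOver.of_map_eq_prod {g : A[X][Y]} {D : A[X]} (hD : D ≠ 0)
    (hsep : SeparableAway g D) {τ : Type*} [Fintype τ] {y : τ → W}
    (hy : (g.map (mapRingHom r)).map (eval₂RingHom i c) = ∏ t, (X - C (y t))) (t : τ) :
    IsSeparableOver (eval₂RingHom i c) (y t) := by
  refine ⟨g.map (mapRingHom r), D.map r, (Polynomial.map_ne_zero_iff r.injective).2 hD, ?_,
    hsep.map (mapRingHom r)⟩
  rw [← eval_map, hy, eval_prod]
  exact Finset.prod_eq_zero (Finset.mem_univ t) (by simp)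

lemma exists_eq_of_map_eq_prod (hi : ρ.comp i = i.comp r) (hρc : ρ c = c) {g : A[X][Y]} {z : W}
    (hz : bieval i c z g = 0) {τ : Type*} [Fintype τ] {y : τ → W}
    (hy : (g.map (mapRingHom r)).map (eval₂RingHom i c) = ∏ t, (X - C (y t))) :
    ∃ t, ρ z = y t := by
  have hroot := map_bieval_of_comp_eq hi c z g
  rw [hz, map_zero, hρc, bieval_eq_eval_map, hy, eval_prod, eq_comm,
    Finset.prod_eq_zero_iff] at hroot
  obtain ⟨t, -, ht⟩ := hroot
  exact ⟨t, by simpa [sub_eq_zero] using ht⟩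

lemma div_mem_and_map_div_mem_fractionPairs {z z' d w w' : W}
    (hker : ∀ N, bieval i c z N = 0 → bieval j d z' N = 0) (hi : ρ.comp i = i.comp r)
    (hj : ρ.comp j = j.comp r) (hρc : ρ c = c) (hρd : ρ d = d)
    (hww' : (w, w') ∈ fractionPairs (bieval i c z) (bieval j d z'))
    (hρww' : (ρ w, ρ w') ∈ fractionPairs (bieval i c z) (bieval j d z')) {E : A[X]}
    (hE : E.eval₂ j d ≠ 0) (hrE : (E.map r).eval₂ j d ≠ 0) (P : A[X][Y]) :
    (bieval i c w P / E.eval₂ i c, bieval j d w' P / E.eval₂ j d) ∈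
        fractionPairs (bieval i c z) (bieval j d z') ∧
      (ρ (bieval i c w P / E.eval₂ i c), ρ (bieval j d w' P / E.eval₂ j d)) ∈
        fractionPairs (bieval i c z) (bieval j d z') := by
  simp only [map_div₀, map_bieval_of_comp_eq hi, map_eval₂_of_comp_eq hi, hρc,
    map_bieval_of_comp_eq hj, map_eval₂_of_comp_eq hj, hρd]
  exact ⟨div_mem_fractionPairs hker
      (bieval_mem_graph map_mem_fractionPairs fst_mem_fractionPairs hww' P)
      (eval₂_mem_fractionPairs E) hE,
    div_mem_fractionPairs hker
      (bieval_mem_graph map_mem_fractionPairs fst_mem_fractionPairs hρww' _)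
      (eval₂_mem_fractionPairs (E.map r)) hrE⟩

theorem hasSpecialization_of_isSeparableOver [IsAlgClosed A] [IsAlgClosed W]
    (hpt : HasTwistedPoints ρ κ) (hi : ρ.comp i = i.comp r) (hj : ρ.comp j = j.comp r)
    (hρc : ρ c = c) (hc : Function.Injective (eval₂RingHom i c)) (S : Finset W)
    (hS : ∀ s ∈ S, IsSeparableOver (eval₂RingHom i c) s) : HasSpecialization ρ κ i j c S := by
  obtain ⟨w, m, E, hm, hirr, hw, hE, -, hsep, hfrac⟩ :=
    exists_primitive_element_of_isSeparableOver hc S hS one_ne_zero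
  obtain ⟨n, y, hn, hy⟩ :=
    exists_eq_prod_X_sub_C ((hm.map (mapRingHom r)).map (eval₂RingHom i c))
  obtain ⟨t, ht⟩ := exists_eq_of_map_eq_prod hi hρc hw hy
  have hEE : E * E.map r ≠ 0 := mul_ne_zero hE ((Polynomial.map_ne_zero_iff r.injective).2 hE)
  obtain ⟨Γ, z, h, hΓ, rfl, hdvd, hz, hwz, hyz⟩ :=
    CurveFunction.exists_of_isSeparableOver hc hm hirr hw ⟨m, E, hE, hw, hsep⟩ y
      (IsSeparableOver.of_map_eq_prod hE hsep hy) hEE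
  obtain ⟨d, z', ⟨hd, hpoint, htwist⟩, hκ⟩ := hpt (Γ.map j) (hΓ.map j) (Fin n)
    (by simpa [hm.natDegree_map, (hm.map (mapRingHom r)).natDegree_map] using hn.symm) _
    (CurveFunction.isCovered_map hΓ hc hz hj (h := h) (by simpa only [← hyz] using hy)) t
  have hker := CurveFunction.bieval_eq_zero_of_isPoint hΓ hc hz hpoint
  have hEd : E.eval₂ j d ≠ 0 ∧ (E.map r).eval₂ j d ≠ 0 := by
    obtain ⟨M, hM⟩ := hdvd
    have := (CurveFunction.isPoint_map_iff.1 hpoint).2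
    rw [hM, eval₂_mul, eval₂_mul] at this
    exact ⟨left_ne_zero_of_mul (left_ne_zero_of_mul this),
      right_ne_zero_of_mul (left_ne_zero_of_mul this)⟩
  set w' := (Γ.map j).quot (Γ.map j).num d z'
  have hww' : (w, w') ∈ fractionPairs (bieval i c z) (bieval j d z') :=
    hwz ▸ CurveFunction.quot_mem_fractionPairs hΓ hc hz hpoint Γ.num
  have hρww' : (ρ w, ρ w') ∈ fractionPairs (bieval i c z) (bieval j d z') := by
    rw [ht, htwist, hyz]
    exact CurveFunction.quot_mem_fractionPairs hΓ hc hz hpoint (h t)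
  refine ⟨fractionPairs (bieval i c z) (bieval j d z'), isGraph_fractionPairs hker,
    map_mem_fractionPairs, ⟨d, fst_mem_fractionPairs, hd, hκ⟩, fun s hs => ?_⟩
  obtain ⟨P, rfl⟩ := hfrac s hs
  exact ⟨_, div_mem_and_map_div_mem_fractionPairs hker hi hj hρc hd hww' hρww' hEd.1 hEd.2 P⟩

/-- Raising to a power of the exponential characteristic makes `S` separable, and is undone on the
other side of the correspondence because `W` is perfect. -/
theorem hasSpecialization_of_isAlgebraicOver [IsAlgClosed A] [IsAlgClosed W]
    (hpt : HasTwistedPoints ρ κ) (hi : ρ.comp i = i.comp r) (hj : ρ.comp j = j.comp r)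
    (hρc : ρ c = c) (hc : Function.Injective (eval₂RingHom i c)) (S : Finset W)
    (hS : ∀ s ∈ S, IsAlgebraicOver (eval₂RingHom i c) s) : HasSpecialization ρ κ i j c S := by
  classical
  obtain ⟨q, hq⟩ := ExpChar.exists W
  choose! m hm using fun s hs => (hS s hs).exists_isSeparableOver_pow q hc
  let Q := q ^ S.sup m
  have hQ : Q ≠ 0 := (pow_pos (expChar_pos W q) _).ne'
  obtain ⟨B, hB, hij, ⟨d, hcd, hd, hκ⟩, hSB⟩ :=
    hasSpecialization_of_isSeparableOver hpt hi hj hρc hc (S.image (· ^ Q)) (by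
      simpa only [Finset.forall_mem_image] using fun s hs => hm s hs _ (Finset.le_sup hs))
  let F : W →+* W := iterateFrobenius W q (S.sup m)
  refine ⟨B.comap (F.prodMap F), fun w hw => ?_, fun a => ?_, ⟨d, pow_mem hcd Q, hd, hκ⟩,
    fun s hs => ?_⟩
  · have hw' : ((0 : W) ^ Q, w ^ Q) ∈ B := hw
    rw [zero_pow hQ] at hw'
    exact (pow_eq_zero_iff hQ).1 (hB _ hw')
  · exact pow_mem (hij a) Q
  · obtain ⟨t, ht, ht'⟩ := hSB _ (Finset.mem_image_of_mem _ hs)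
    obtain ⟨u, rfl⟩ := IsAlgClosed.exists_pow_nat_eq t (Nat.pos_of_ne_zero hQ)
    simp only [map_pow] at ht'
    exact ⟨u, ht, ht'⟩

end Specialization

section Saturation

/-- Countable saturation. -/
theorem exists_forall_eventually_of_finite {l : Filter ℕ} (hl : l ≤ atTop) {X : ℕ → Type*}
    [∀ i, Nonempty (X i)] {τ : Type*} [Countable τ] (P : τ → ∀ i, X i → Prop)
    (h : ∀ T : Finset τ, ∀ᶠ i in l, ∃ x, ∀ t ∈ T, P t i x) :
    ∃ x : ∀ i, X i, ∀ t, ∀ᶠ i in l, P t i (x i) := by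
  classical
  obtain ⟨e, he⟩ := exists_injective_nat τ
  let T (N : ℕ) : Finset τ := (Finset.range N).preimage e he.injOn
  let N (i : ℕ) : ℕ := Nat.findGreatest (fun N => ∃ x : X i, ∀ t ∈ T N, P t i x) i
  have hN : ∀ i, ∃ x : X i, ∀ t ∈ T (N i), P t i x := fun i =>
    Nat.findGreatest_spec (P := fun N => ∃ x : X i, ∀ t ∈ T N, P t i x) (Nat.zero_le i)
      ⟨Classical.arbitrary _, by simp [T]⟩
  choose x hx using hN
  refine ⟨x, fun t => ?_⟩
  filter_upwards [h (T (e t + 1)), hl (eventually_ge_atTop (e t + 1))] with i hi hti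
  have hle : e t + 1 ≤ N i := Nat.le_findGreatest hti hi
  exact hx i t (Finset.mem_preimage.2 (Finset.mem_range.2 hle))

end Saturation

section AlgebraicOver

lemma exists_countable_isAlgClosed_subfield {R W : Type*} [CommRing R] [IsDomain R] [Countable R]
    [Field W] [IsAlgClosed W] {φ : R →+* W} (hφ : Function.Injective φ) :
    ∃ E : Subfield W, Countable E ∧ IsAlgClosed E ∧ ∀ s, s ∈ E ↔ IsAlgebraicOver φ s := by
  algebraize [φ]
  have : FaithfulSMul R W := (faithfulSMul_iff_algebraMap_injective R W).2 hφ
  let K := FractionRing R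
  let _ : Algebra K W := FractionRing.liftAlgebra R W
  have hmem (s : W) : s ∈ (algebraicClosure K W).toSubfield ↔ IsAlgebraic R s :=
    mem_algebraicClosure_iff.trans (IsFractionRing.isAlgebraic_iff R K W).symm
  have hcoe : ((algebraicClosure K W).toSubfield : Set W) = {s | IsAlgebraic R s} := Set.ext hmem
  exact ⟨(algebraicClosure K W).toSubfield, (hcoe ▸ Algebraic.countable R W).to_subtype,
    (algebraicClosure.isAlgClosure K W).1, hmem⟩

lemma injective_eval₂RingHom_of_notMem_range {A W : Type*} [Field A] [IsAlgClosed A] [Field W]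
    {i : A →+* W} {c : W} (hc : c ∉ i.range) : Function.Injective (eval₂RingHom i c) := by
  refine (injective_iff_map_eq_zero _).2 fun f hf => by_contra fun hf0 => hc ?_
  exact (IsAlgClosed.splits f).mem_range_of_isRoot hf0 ((eval_map i c).trans hf)

lemma IsAlgebraicOver.map {R W : Type*} [CommRing R] [Field W] {φ : R →+* W} {σ : R →+* R}
    {ρ : W →+* W} (hσ : Function.Injective σ) (h : ρ.comp φ = φ.comp σ) {s : W}
    (hs : IsAlgebraicOver φ s) : IsAlgebraicOver φ (ρ s) := by
  obtain ⟨G, hG, hGs⟩ := hs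
  refine ⟨G.map σ, (Polynomial.map_ne_zero_iff hσ).2 hG, ?_⟩
  rw [eval₂_map, ← h, ← hom_eval₂, hGs, map_zero]

end AlgebraicOver

section Extension

variable {A E W : Type*} [Field A] [Field E] [Field W]

/-- On the set `T` the map `f : E → W` is additive, multiplicative and commutes with `σ` and `ρ`;
moreover `f` extends `j` along `u` and sends `γ` outside the fixed field of `κ`. -/
structure IsExtensionOn (ρ κ : W →+* W) (σ : E →+* E) (u : A →+* E) (j : A →+* W) (γ : E)
    (T : Set E) (f : E → W) : Prop where
  map_add : ∀ a ∈ T, ∀ b ∈ T, f (a + b) = f a + f b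
  map_mul : ∀ a ∈ T, ∀ b ∈ T, f (a * b) = f a * f b
  map_apply : ∀ a ∈ T, f (σ a) = ρ (f a)
  map_base : ∀ a, f (u a) = j a
  map_ne : κ (f γ) ≠ f γ

variable {ρ κ : W →+* W} {σ : E →+* E} {u : A →+* E} {j : A →+* W} {γ : E}

lemma HasSpecialization.exists_isExtensionOn [DecidableEq W] {i : A →+* W} {i' : E →+* W} {c : W}
    (hσ : ρ.comp i' = i'.comp σ) (hu : i'.comp u = i) (hγ : i' γ = c) (T : Finset E)
    (h : HasSpecialization ρ κ i j c (T.image i')) : ∃ f, IsExtensionOn ρ κ σ u j γ T f := by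
  obtain ⟨B, hB, hij, ⟨d, hcd, -, hd⟩, hBT⟩ := h
  let f (a : E) : W := Classical.epsilon fun w => (i' a, w) ∈ B
  have hf (a : E) (hw : ∃ w, (i' a, w) ∈ B) : (i' a, f a) ∈ B := Classical.epsilon_spec hw
  have hfB {a : E} {w : W} (hw : (i' a, w) ∈ B) : f a = w := by
    have hsub := sub_mem (hf a ⟨w, hw⟩) hw
    rw [Prod.mk_sub_mk, sub_self] at hsub
    exact sub_eq_zero.1 (hB _ hsub)
  have hT : ∀ a ∈ (T : Set E), (i' a, f a) ∈ B ∧ (i' (σ a), ρ (f a)) ∈ B := fun a ha => by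
    obtain ⟨w, hw, hw'⟩ := hBT _ (Finset.mem_image_of_mem _ ha)
    rw [hfB hw, ← RingHom.comp_apply i' σ, ← hσ]
    exact ⟨hw, hw'⟩
  refine ⟨f, fun a ha b hb => hfB ?_, fun a ha b hb => hfB ?_, fun a ha => hfB (hT a ha).2,
    fun a => hfB ?_, ?_⟩
  · rw [_root_.map_add]
    exact add_mem (hT a ha).1 (hT b hb).1
  · rw [_root_.map_mul]
    exact mul_mem (hT a ha).1 (hT b hb).1
  · rw [← RingHom.comp_apply, hu]
    exact hij a
  · rwa [hfB (hγ.symm ▸ hcd)]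

lemma IsExtensionOn.exists_ringHom {f : E → W} (hf : IsExtensionOn ρ κ σ u j γ Set.univ f) :
    ∃ j' : E →+* W, ρ.comp j' = j'.comp σ ∧ j'.comp u = j ∧ κ (j' γ) ≠ j' γ := by
  have hone : f 1 = 1 := by rw [← _root_.map_one u, hf.map_base, _root_.map_one]
  have hzero : f 0 = 0 := by rw [← _root_.map_zero u, hf.map_base, _root_.map_zero]
  exact ⟨{  toFun := f
            map_one' := hone
            map_mul' := fun a b => hf.map_mul a trivial b trivial
            map_zero' := hzero
            map_add' := fun a b => hf.map_add a trivial b trivial },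
    RingHom.ext fun a => (hf.map_apply a trivial).symm, RingHom.ext hf.map_base, hf.map_ne⟩

end Extension

section Ultraproduct

open Ultraproduct

variable {K : ℕ → Type*} [∀ n, Field (K n)] {U : Ultrafilter ℕ} {r s : ∀ n, K n →+* K n}

lemma exists_isExtensionOn_univ (hU : (U : Filter ℕ) ≤ atTop) {A E : Type*} [Field A] [Countable A]
    [Field E] [Countable E] {σ : E →+* E} {u : A →+* E} {j : A →+* Ultraproduct U K} {γ : E}
    (h : ∀ T : Finset E, ∃ f, IsExtensionOn (map r) (map s) σ u j γ T f) :
    ∃ f, IsExtensionOn (map r) (map s) σ u j γ Set.univ f := by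
  classical
  choose g hg using fun a => ofSeq_surjective U K (j a)
  let P (t : E × E × A) (n : ℕ) (x : E → K n) : Prop :=
    x (t.1 + t.2.1) = x t.1 + x t.2.1 ∧ x (t.1 * t.2.1) = x t.1 * x t.2.1 ∧
      x (σ t.1) = r n (x t.1) ∧ x (u t.2.2) = g t.2.2 n ∧ s n (x γ) ≠ x γ
  have hP (F : ∀ n, E → K n) (t : E × E × A) : (∀ᶠ n in (U : Filter ℕ), P t n (F n)) ↔
      let f (a : E) := ofSeq U K fun n => F n a
      f (t.1 + t.2.1) = f t.1 + f t.2.1 ∧ f (t.1 * t.2.1) = f t.1 * f t.2.1 ∧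
        f (σ t.1) = map r (f t.1) ∧ f (u t.2.2) = j t.2.2 ∧ map s (f γ) ≠ f γ := by
    simp only [P, eventually_and, ← hg, map_ofSeq, ← _root_.map_add, ← _root_.map_mul,
      ofSeq_eq_iff, ofSeq_ne_iff]
    rfl
  obtain ⟨F, hF⟩ := exists_forall_eventually_of_finite hU P fun T => by
    obtain ⟨f, hf⟩ := h (T.biUnion fun t => {t.1, t.2.1})
    choose F hF using fun a => ofSeq_surjective U K (f a)
    have hT : ∀ t ∈ T, ∀ᶠ n in (U : Filter ℕ), P t n fun a => F a n := fun t ht => by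
      have h₁ : t.1 ∈ T.biUnion fun t => {t.1, t.2.1} := Finset.mem_biUnion.2 ⟨t, ht, by simp⟩
      have h₂ : t.2.1 ∈ T.biUnion fun t => {t.1, t.2.1} := Finset.mem_biUnion.2 ⟨t, ht, by simp⟩
      rw [hP fun n a => F a n]
      simp only [hF]
      exact ⟨hf.map_add _ h₁ _ h₂, hf.map_mul _ h₁ _ h₂, hf.map_apply _ h₁, hf.map_base _,
        hf.map_ne⟩
    filter_upwards [(eventually_all_finset T).2 hT] with n hn
    exact ⟨fun a => F a n, hn⟩
  have hf := fun t => (hP F t).1 (hF t)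
  exact ⟨fun a => ofSeq U K fun n => F n a, fun a _ b _ => (hf (a, b, 0)).1,
    fun a _ b _ => (hf (a, b, 0)).2.1, fun a _ => (hf (a, 0, 0)).2.2.1,
    fun a => (hf (0, 0, a)).2.2.2.1, (hf 0).2.2.2.2⟩

end Ultraproduct

section BackAndForth

universe u

variable {ι : Type*} {W : Type u} [Field W] {ρ : W →+* W} {a b : ι → W}

/-- The tuples `a` and `b` of elements of the difference field `(W, ρ)` correspond to each other
under two embeddings of a countable algebraically closed difference field. -/
def BackAndForth (ρ : W →+* W) (a b : ι → W) : Prop :=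
  ∃ (A : Type u) (_ : Field A) (_ : IsAlgClosed A) (_ : Countable A) (σ : A →+* A)
    (i j : A →+* W), ρ.comp i = i.comp σ ∧ ρ.comp j = j.comp σ ∧ ∃ α : ι → A, i ∘ α = a ∧ j ∘ α = b

lemma BackAndForth.symm (h : BackAndForth ρ a b) : BackAndForth ρ b a := by
  obtain ⟨A, hA, hcl, hct, σ, i, j, hi, hj, α, ha, hb⟩ := h
  exact ⟨A, hA, hcl, hct, σ, j, i, hj, hi, α, hb, ha⟩

lemma BackAndForth.comp {ι' : Type*} (h : BackAndForth ρ a b) (f : ι' → ι) :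
    BackAndForth ρ (a ∘ f) (b ∘ f) := by
  obtain ⟨A, hA, hcl, hct, σ, i, j, hi, hj, α, rfl, rfl⟩ := h
  exact ⟨A, hA, hcl, hct, σ, i, j, hi, hj, α ∘ f, rfl, rfl⟩

lemma map_eq_self_of_comp_eq {A : Type*} [Field A] {σ : A →+* A} {i j : A →+* W}
    (hi : ρ.comp i = i.comp σ) (hj : ρ.comp j = j.comp σ) {γ : A} (hγ : ρ (i γ) = i γ) :
    ρ (j γ) = j γ := by
  have hσ : σ γ = γ := i.injective (by rw [← RingHom.comp_apply, ← hi, RingHom.comp_apply, hγ])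
  rw [← RingHom.comp_apply, hj, RingHom.comp_apply, hσ]

variable {K : ℕ → Type u} [∀ n, Field (K n)] [∀ n, IsAlgClosed (K n)] {U : Ultrafilter ℕ}
  {r s : ∀ n, K n →+* K n}

theorem exists_backAndForth_of_transcendental (hU : (U : Filter ℕ) ≤ atTop)
    (hpt : HasTwistedPoints (Ultraproduct.map (U := U) r) (Ultraproduct.map s))
    {A : Type*} [Field A] [IsAlgClosed A] [Countable A] {σ : A →+* A}
    {i j : A →+* Ultraproduct U K} (hi : (Ultraproduct.map r).comp i = i.comp σ)
    (hj : (Ultraproduct.map r).comp j = j.comp σ) {c : Ultraproduct U K}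
    (hρc : Ultraproduct.map r c = c) (hc : Function.Injective (eval₂RingHom i c)) (α : ι → A) :
    ∃ d, Ultraproduct.map r d = d ∧ Ultraproduct.map s d ≠ d ∧
      BackAndForth (Ultraproduct.map r) (fun k : Option ι => k.elim c (i ∘ α))
        fun k => k.elim d (j ∘ α) := by
  classical
  have : Countable A[X] := Cardinal.mk_le_aleph0_iff.1 (cardinalMk_le_max.trans (by simp))
  obtain ⟨E, hct, hcl, hE⟩ := exists_countable_isAlgClosed_subfield hc
  have hEi (a : A) : i a ∈ E := (hE _).2 ⟨X - C (C a), X_sub_C_ne_zero _, by simp⟩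
  have hEc : c ∈ E := (hE _).2 ⟨X - C X, X_sub_C_ne_zero _, by simp⟩
  have hφ : (Ultraproduct.map r).comp (eval₂RingHom i c) =
      (eval₂RingHom i c).comp (mapRingHom σ) := by
    ext a
    · simpa using RingHom.congr_fun hi a
    · simpa using hρc
  have hEρ : ∀ e ∈ E, Ultraproduct.map r e ∈ E := fun e he =>
    (hE _).2 (((hE e).1 he).map (map_injective σ σ.injective) hφ)
  let τ : E →+* E := ((Ultraproduct.map r).comp E.subtype).codRestrict E fun e => hEρ e e.2
  let u : A →+* E := i.codRestrict E hEi
  have hτ : (Ultraproduct.map r).comp E.subtype = E.subtype.comp τ := rfl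
  obtain ⟨f, hf⟩ := exists_isExtensionOn_univ (r := r) (s := s) (σ := τ) (u := u) (j := j)
    (γ := ⟨c, hEc⟩) hU fun T => HasSpecialization.exists_isExtensionOn hτ rfl rfl T <|
      hasSpecialization_of_isAlgebraicOver hpt hi hj hρc hc _ fun w hw => by
        obtain ⟨e, -, rfl⟩ := Finset.mem_image.1 hw
        exact (hE e).1 e.2
  obtain ⟨j', hj', hu, hd⟩ := hf.exists_ringHom
  refine ⟨j' ⟨c, hEc⟩, map_eq_self_of_comp_eq hτ hj' hρc, hd, E, inferInstance, hcl, hct, τ,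
    E.subtype, j', hτ, hj', fun k => k.elim ⟨c, hEc⟩ (u ∘ α), ?_, ?_⟩
  · ext (_ | k) <;> rfl
  · ext (_ | k)
    · rfl
    · exact RingHom.congr_fun hu (α k)

theorem BackAndForth.exists_extend (hU : (U : Filter ℕ) ≤ atTop)
    (hpt : HasTwistedPoints (Ultraproduct.map (U := U) r) (Ultraproduct.map s))
    {a b : ι → Ultraproduct U K} (h : BackAndForth (Ultraproduct.map r) a b)
    {c : Ultraproduct U K} (hc : Ultraproduct.map r c = c) :
    ∃ d, Ultraproduct.map r d = d ∧ BackAndForth (Ultraproduct.map r)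
      (fun k : Option ι => k.elim c a) fun k => k.elim d b := by
  obtain ⟨A, hA, hcl, hct, σ, i, j, hi, hj, α, rfl, rfl⟩ := h
  by_cases hci : c ∈ i.range
  · obtain ⟨γ, rfl⟩ := hci
    refine ⟨j γ, map_eq_self_of_comp_eq hi hj hc, A, hA, hcl, hct, σ, i, j, hi, hj,
      fun k => k.elim γ α, ?_, ?_⟩ <;> ext (_ | k) <;> rfl
  · obtain ⟨d, hd, -, hcd⟩ := exists_backAndForth_of_transcendental hU hpt hi hj hc
      (injective_eval₂RingHom_of_notMem_range hci) α
    exact ⟨d, hd, hcd⟩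

end BackAndForth

section Formulas

lemma realize_term_ringHom {R S : Type*} [CommRing R] [CommRing S] [Ring.CompatibleRing R]
    [Ring.CompatibleRing S] (f : R →+* S) {α : Type*} (v : α → R) (t : Language.ring.Term α) :
    t.realize (f ∘ v) = f (t.realize v) := by
  induction t with
  | var k => rfl
  | func g ts ih => cases g <;> simp [Language.Term.realize, ih]

variable {W : Type*} [Field W] {ρ : W →+* W} {F : Type*} [Field F] [Ring.CompatibleRing F]
  {α : Type}

lemma BackAndForth.realize_eq_iff (f : F →+* W) {v w : α → F} (h : BackAndForth ρ (f ∘ v) (f ∘ w))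
    (t₁ t₂ : Language.ring.Term α) :
    t₁.realize v = t₂.realize v ↔ t₁.realize w = t₂.realize w := by
  obtain ⟨A, _, -, -, -, i, j, -, -, x, hv, hw⟩ := h
  let _ := Ring.compatibleRingOfRing A
  let _ := Ring.compatibleRingOfRing W
  have hx {g : A →+* W} {u : α → F} (hu : g ∘ x = f ∘ u) :
      t₁.realize u = t₂.realize u ↔ t₁.realize x = t₂.realize x := by
    rw [← f.injective.eq_iff, ← g.injective.eq_iff]
    simp only [← realize_term_ringHom, hu]
  rw [hx hv, hx hw]

lemma comp_elim_snoc {M N : Type*} (f : M → N) {n : ℕ} (v : α → M) (xs : Fin n → M) (x : M) :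
    f ∘ Sum.elim v (Fin.snoc xs x : Fin (n + 1) → M) =
      (fun k : Option (α ⊕ Fin n) => k.elim (f x) (f ∘ Sum.elim v xs)) ∘
        Sum.elim (some ∘ Sum.inl) (Fin.snoc (some ∘ Sum.inr) none) := by
  ext (a | k)
  · rfl
  · refine Fin.lastCases ?_ (fun k => ?_) k <;> simp

theorem BackAndForth.realize_iff {f : F →+* W} (hf : ∀ x, ρ x = x ↔ x ∈ f.range)
    (hext : ∀ (n : ℕ) (a b : α ⊕ Fin n → W), BackAndForth ρ a b → ∀ c, ρ c = c →
      ∃ d, ρ d = d ∧ BackAndForth ρ (fun k : Option (α ⊕ Fin n) => k.elim c a) fun k => k.elim d b)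
    {n : ℕ} (φ : Language.ring.BoundedFormula α n) {v w : α → F} {xs ys : Fin n → F}
    (h : BackAndForth ρ (f ∘ Sum.elim v xs) (f ∘ Sum.elim w ys)) :
    φ.Realize v xs ↔ φ.Realize w ys := by
  induction φ generalizing v w with
  | falsum => rfl
  | equal t₁ t₂ => exact h.realize_eq_iff f t₁ t₂
  | rel R ts => exact isEmptyElim R
  | imp φ₁ φ₂ ih₁ ih₂ => exact imp_congr (ih₁ h) (ih₂ h)
  | @all n φ ih =>
    have hall {v w : α → F} {xs ys : Fin n → F}
        (h : BackAndForth ρ (f ∘ Sum.elim v xs) (f ∘ Sum.elim w ys)) (hw : φ.all.Realize w ys) :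
        φ.all.Realize v xs := fun x => by
      obtain ⟨d, hd, hxd⟩ := hext n _ _ h (f x) ((hf _).2 ⟨x, rfl⟩)
      obtain ⟨y, rfl⟩ := (hf d).1 hd
      refine (ih ?_).2 (hw y)
      rw [comp_elim_snoc f v, comp_elim_snoc f w]
      exact hxd.comp _
    exact ⟨hall h.symm, hall h⟩

end Formulas

namespace Ultraproduct

variable {ι : Type*} {U : Ultrafilter ι} {M : ι → Type*} [∀ n, Field (M n)]
  [∀ n, Ring.CompatibleRing (M n)] [Ring.CompatibleRing (Ultraproduct U M)]

/-- The comparison of `Ultraproduct U M` with the filter product, which carries Łoś's theorem. -/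
noncomputable def productEquiv :
    Language.ring.Equiv ((U : Filter ι).Product M) (Ultraproduct U M) where
  toEquiv := Equiv.ofBijective (Quotient.lift (ofSeq U M) fun _ _ => ofSeq_eq_iff.2)
    ⟨fun x y => Quotient.inductionOn₂ x y fun _ _ h => Quotient.sound (ofSeq_eq_iff.1 h),
      fun x => (ofSeq_surjective U M x).imp' (Quotient.mk _) fun _ => id⟩
  map_fun' {n} g x := by
    obtain ⟨y, rfl⟩ : ∃ y : Fin n → ∀ i, M i, x = fun k => (y k : (U : Filter ι).Product M) :=
      ⟨fun k => (x k).out, funext fun k => (Quotient.out_eq _).symm⟩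
    refine (congrArg _ (Language.Ultraproduct.funMap_cast g y)).trans ?_
    change ofSeq U M (fun i => Language.Structure.funMap g fun k => y k i) =
      Language.Structure.funMap g fun k => ofSeq U M (y k)
    cases g <;> simp only [Ring.CompatibleRing.funMap_add, Ring.CompatibleRing.funMap_mul,
      Ring.CompatibleRing.funMap_neg, Ring.CompatibleRing.funMap_zero,
      Ring.CompatibleRing.funMap_one] <;> rfl
  map_rel' R := isEmptyElim R

theorem realize_ofSeq_iff {α : Type*} (φ : Language.ring.Formula α) (v : α → ∀ i, M i) :
    φ.Realize (ofSeq U M ∘ v) ↔ ∀ᶠ i in (U : Filter ι), φ.Realize fun k => v k i := by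
  rw [← Language.Ultraproduct.realize_formula_cast]
  exact Language.StrongHomClass.realize_formula (productEquiv (U := U) (M := M)) φ
    (v := fun k => (v k : (U : Filter ι).Product M))

end Ultraproduct

/-! ### Undefinability -/

section Ultraproduct

open Ultraproduct

lemma Ultraproduct.map_eq_self_iff {ι : Type*} {U : Ultrafilter ι} {M K : ι → Type*}
    [∀ n, Field (M n)] [∀ n, Field (K n)] {r : ∀ n, K n →+* K n} {ε : ∀ n, M n →+* K n}
    (hε : ∀ n x, r n x = x ↔ x ∈ (ε n).range) (w : Ultraproduct U K) :
    map r w = w ↔ w ∈ (map (U := U) ε).range := by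
  refine ⟨fun hw => ?_, ?_⟩
  · obtain ⟨x, rfl⟩ := ofSeq_surjective U K w
    obtain ⟨y, hy⟩ := skolem.1 ((ofSeq_eq_iff.1 hw).mono fun n hn => (hε n _).1 hn)
    exact ⟨ofSeq U M y, ofSeq_eq_iff.2 hy⟩
  · rintro ⟨v, rfl⟩
    obtain ⟨y, rfl⟩ := ofSeq_surjective U M v
    exact ofSeq_eq_iff.2 (Eventually.of_forall fun n => (hε n _).2 ⟨y n, rfl⟩)

lemma exists_countable_isAlgClosed_subfield_map_mem {W : Type*} [Field W] [IsAlgClosed W]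
    (ρ : W →+* W) :
    ∃ E : Subfield W, Countable E ∧ IsAlgClosed E ∧ ∀ x ∈ E, ρ x ∈ E := by
  have : Countable (Int.castRingHom W).range := (Set.countable_range _).to_subtype
  obtain ⟨E, hct, hcl, hE⟩ := exists_countable_isAlgClosed_subfield
    (φ := (Int.castRingHom W).range.subtype) Subtype.val_injective
  refine ⟨E, hct, hcl, fun x hx => (hE _).2 (((hE x).1 hx).map (σ := RingHom.id _)
    Function.injective_id ?_)⟩
  ext ⟨_, n, rfl⟩
  exact map_intCast ρ n

variable {K : ℕ → Type*} [∀ n, Field (K n)] {U : Ultrafilter ℕ} {r s : ∀ n, K n →+* K n}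

lemma exists_map_eq_self_notMem (hU : (U : Filter ℕ) ≤ atTop)
    (hfix : ∀ N, ∀ᶠ n in (U : Filter ℕ), ∃ F : Finset (K n), N ≤ F.card ∧ ∀ x ∈ F, s n x = x)
    {E : Set (Ultraproduct U K)} (hE : E.Countable) : ∃ c, map s c = c ∧ c ∉ E := by
  classical
  have := hE.to_subtype
  choose a ha using fun t : E => ofSeq_surjective U K t
  obtain ⟨c, hc⟩ := exists_forall_eventually_of_finite hU
    (fun (t : Option E) n (x : K n) => s n x = x ∧ ∀ t' ∈ t, x ≠ a t' n) fun T => by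
    filter_upwards [hfix (T.card + 1)] with n ⟨F, hcard, hF⟩
    obtain ⟨x, hx, hxT⟩ := Finset.exists_mem_notMem_of_card_lt_card
      ((Finset.card_image_le (s := T) (f := fun t => t.elim 0 fun t' => a t' n)).trans_lt hcard)
    refine ⟨x, fun t ht => ⟨hF x hx, fun t' ht' hxt => hxT (Finset.mem_image.2 ⟨t, ht, ?_⟩)⟩⟩
    rw [Option.mem_def.1 ht', hxt]
    rfl
  refine ⟨ofSeq U K c, ofSeq_eq_iff.2 ((hc none).mono fun n hn => hn.1), fun hcE => ?_⟩
  refine ofSeq_ne_iff.2 ((hc (some ⟨_, hcE⟩)).mono fun n hn => hn.2 _ rfl) (ha ⟨_, hcE⟩).symm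

end Ultraproduct

section Undefinability

universe u

variable {K : ℕ → Type u} [∀ n, Field (K n)] [∀ n, IsAlgClosed (K n)] {U : Ultrafilter ℕ}
  {r s : ∀ n, K n →+* K n}

theorem exists_backAndForth_fixed_not_fixed (hU : (U : Filter ℕ) ≤ atTop)
    (hpt : HasTwistedPoints (Ultraproduct.map (U := U) r) (Ultraproduct.map s))
    (hsr : ∀ n x, s n x = x → r n x = x)
    (hfix : ∀ N, ∀ᶠ n in (U : Filter ℕ), ∃ F : Finset (K n), N ≤ F.card ∧ ∀ x ∈ F, s n x = x)
    (ι : Type*) :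
    ∃ c d : Ultraproduct U K, Ultraproduct.map r c = c ∧ Ultraproduct.map r d = d ∧
      Ultraproduct.map s c = c ∧ Ultraproduct.map s d ≠ d ∧
      BackAndForth (Ultraproduct.map r) (fun _ : ι => c) fun _ => d := by
  obtain ⟨E, hct, hcl, hE⟩ :=
    exists_countable_isAlgClosed_subfield_map_mem (Ultraproduct.map (U := U) r)
  obtain ⟨c, hc, hcE⟩ := exists_map_eq_self_notMem hU hfix (Set.countable_coe_iff.1 hct)
  have hρc : Ultraproduct.map r c = c := by
    obtain ⟨x, rfl⟩ := Ultraproduct.ofSeq_surjective U K c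
    exact Ultraproduct.ofSeq_eq_iff.2 ((Ultraproduct.ofSeq_eq_iff.1 hc).mono fun n => hsr n _)
  let σ : E →+* E := ((Ultraproduct.map r).comp E.subtype).codRestrict E fun x => hE x x.2
  have hσ : (Ultraproduct.map r).comp E.subtype = E.subtype.comp σ := rfl
  obtain ⟨d, hρd, hd, hcd⟩ := exists_backAndForth_of_transcendental (ι := Empty) hU hpt hσ hσ hρc
    (injective_eval₂RingHom_of_notMem_range fun ⟨x, hx⟩ => hcE (hx ▸ x.2)) Empty.elim
  exact ⟨c, d, hρc, hρd, hc, hd, hcd.comp fun _ => none⟩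

theorem exists_forall_eventually_realize_iff (hU : (U : Filter ℕ) ≤ atTop)
    (hpt : HasTwistedPoints (Ultraproduct.map (U := U) r) (Ultraproduct.map s))
    (hsr : ∀ n x, s n x = x → r n x = x)
    (hfix : ∀ N, ∀ᶠ n in (U : Filter ℕ), ∃ F : Finset (K n), N ≤ F.card ∧ ∀ x ∈ F, s n x = x)
    {M : ℕ → Type*} [∀ n, Field (M n)] [∀ n, Ring.CompatibleRing (M n)] {ε : ∀ n, M n →+* K n}
    (hε : ∀ n x, r n x = x ↔ x ∈ (ε n).range) (α : Type) :
    ∃ x y : ∀ n, M n, (∀ᶠ n in (U : Filter ℕ), s n (ε n (x n)) = ε n (x n)) ∧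
      (∀ᶠ n in (U : Filter ℕ), s n (ε n (y n)) ≠ ε n (y n)) ∧
      ∀ φ : Language.ring.Formula α, (∀ᶠ n in (U : Filter ℕ), φ.Realize fun _ => x n) ↔
        ∀ᶠ n in (U : Filter ℕ), φ.Realize fun _ => y n := by
  let _ := Ring.compatibleRingOfRing (Ultraproduct U M)
  have hf := Ultraproduct.map_eq_self_iff (U := U) hε
  obtain ⟨c, d, hρc, hρd, hc, hd, hcd⟩ :=
    exists_backAndForth_fixed_not_fixed hU hpt hsr hfix (α ⊕ Fin 0)
  obtain ⟨v, rfl⟩ := (hf c).1 hρc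
  obtain ⟨x, rfl⟩ := Ultraproduct.ofSeq_surjective U M v
  obtain ⟨w, rfl⟩ := (hf d).1 hρd
  obtain ⟨y, rfl⟩ := Ultraproduct.ofSeq_surjective U M w
  refine ⟨x, y, Ultraproduct.ofSeq_eq_iff.1 hc, Ultraproduct.ofSeq_ne_iff.1 hd, fun φ => ?_⟩
  rw [← Ultraproduct.realize_ofSeq_iff φ fun _ => x, ← Ultraproduct.realize_ofSeq_iff φ fun _ => y]
  refine BackAndForth.realize_iff hf (fun n a b hab c hc => hab.exists_extend hU hpt hc) φ ?_
  convert hcd using 1 <;> ext (a | k)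
  · rfl
  · exact k.elim0
  · rfl
  · exact k.elim0

end Undefinability

lemma iterateFrobenius_eq_self_iff_mem_range {p m : ℕ} [Fact p.Prime] (hm : m ≠ 0) {L : Type*}
    [Field L] [CharP L p] (f : GaloisField p m →+* L) (x : L) :
    iterateFrobenius L p m x = x ↔ x ∈ f.range := by
  rw [iterateFrobenius_def, ← GaloisField.card p m hm]
  refine ⟨fun hx => ?_, ?_⟩
  · refine (splits_X_pow_nat_card_sub_X (K := GaloisField p m)).mem_range_of_isRoot
      (FiniteField.X_pow_card_sub_X_ne_zero _ Finite.one_lt_card) ?_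
    simp [hx]
  · rintro ⟨y, rfl⟩
    have := Fintype.ofFinite (GaloisField p m)
    rw [← map_pow, Nat.card_eq_fintype_card, FiniteField.pow_card]

lemma iterateFrobenius_two_mul_eq_self {R : Type*} [CommSemiring R] {p m : ℕ} [ExpChar R p] {x : R}
    (hx : iterateFrobenius R p m x = x) : iterateFrobenius R p (2 * m) x = x := by
  rw [two_mul, iterateFrobenius_add_apply, hx, hx]

lemma tendsto_pow_atTop_of_injective {p e : ℕ → ℕ} (hp : ∀ n, 1 < p n) (he : ∀ n, e n ≠ 0)
    (hinj : Function.Injective fun n => (p n, e n)) :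
    Tendsto (fun n => p n ^ e n) atTop atTop := by
  refine tendsto_atTop.2 fun N => ?_
  rw [← Nat.cofinite_eq_atTop]
  refine (((Set.finite_Iio N).prod (Set.finite_Iio N)).preimage hinj.injOn).subset fun n hn => ?_
  have hlt : p n ^ e n < N := not_le.1 hn
  exact ⟨(Nat.le_self_pow (he n) _).trans_lt hlt, (Nat.lt_pow_self (hp n)).trans hlt⟩

theorem exists_setOf_ringFormulaSat_ne (φ : Language.ring.Formula (Fin 1)) (p e : ℕ → ℕ)
    [∀ n, Fact (p n).Prime] (he : ∀ n, e n ≠ 0)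
    (hlim : Tendsto (fun n => p n ^ e n) atTop atTop) :
    ∃ n, {x : GaloisField (p n) (2 * e n) | RingFormulaSat φ _ fun _ => x} ≠
      {x | x ^ p n ^ e n = x} := by
  by_contra! h
  let U : Ultrafilter ℕ := hyperfilter ℕ
  have hU : (U : Filter ℕ) ≤ atTop := Nat.cofinite_eq_atTop ▸ hyperfilter_le_cofinite
  let K (n : ℕ) := AlgebraicClosure (GaloisField (p n) (2 * e n))
  let _ (n : ℕ) := Ring.compatibleRingOfRing (GaloisField (p n) (2 * e n))
  have (n : ℕ) : CharP (K n) (p n) :=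
    charP_of_injective_algebraMap' (GaloisField (p n) (2 * e n)) (p n)
  have hq (N : ℕ) : ∀ᶠ n in (U : Filter ℕ), N ≤ p n ^ e n := hU (hlim.eventually_ge_atTop N)
  obtain ⟨x, y, hx, hy, hxy⟩ := exists_forall_eventually_realize_iff hU
    (Ultraproduct.hasTwistedPoints (K := K) p e he hq)
    (fun _ _ => iterateFrobenius_two_mul_eq_self)
    (fun N => (hq N).mono fun n hn => by
      obtain ⟨F, hcard, hF⟩ := exists_finset_iterateFrobenius_eq (k := K n) (p n) (he n)
      exact ⟨F, hn.trans_eq hcard.symm, fun x => (hF x).1⟩)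
    (ε := fun n => algebraMap (GaloisField (p n) (2 * e n)) (K n))
    (fun n => iterateFrobenius_eq_self_iff_mem_range (mul_ne_zero two_ne_zero (he n)) _) (Fin 1)
  have hφ (n : ℕ) (z : GaloisField (p n) (2 * e n)) :
      iterateFrobenius (K n) (p n) (e n) (algebraMap _ _ z) = algebraMap _ _ z ↔
        φ.Realize fun _ => z := by
    rw [iterateFrobenius_def, ← map_pow, (FaithfulSMul.algebraMap_injective _ (K n)).eq_iff]
    exact (Set.ext_iff.1 (h n) z).symm
  obtain ⟨n, hn, hn'⟩ := (((hxy φ).1 (hx.mono fun n => (hφ n _).1)).and hy).exists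
  exact hn' ((hφ n _).2 hn)

end Felgner

/-- Negative answer to Felgner's problem: for any first-order formula `φ` of the language of
rings in one free variable, there are only finitely many pairs `(p, k)` (`p` prime, `k ≥ 1`)
such that, in the field with `p^{2k}` elements, `φ` defines exactly the subfield with `p^k`
elements (the fixed points of `x ↦ x^{p^k}`). -/
theorem felgner_negative (φ : Language.ring.Formula (Fin 1)) :
    {pk : ℕ × ℕ | ∃ hp : pk.1.Prime, 1 ≤ pk.2 ∧
      haveI : Fact pk.1.Prime := ⟨hp⟩
      {x : GaloisField pk.1 (2 * pk.2) | RingFormulaSat φ (GaloisField pk.1 (2 * pk.2)) (fun _ => x)} =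
        {x : GaloisField pk.1 (2 * pk.2) | x ^ pk.1 ^ pk.2 = x}}.Finite := by
  by_contra! hinf
  let f : ℕ ↪ _ := hinf.natEmbedding
  have (n : ℕ) : Fact (f n).1.1.Prime := ⟨(f n).2.choose⟩
  have he (n : ℕ) : (f n).1.2 ≠ 0 := (Nat.one_le_iff_ne_zero.1 (f n).2.choose_spec.1)
  have hlim := Felgner.tendsto_pow_atTop_of_injective (fun n => (Fact.out : (f n).1.1.Prime).one_lt)
    he fun m n hmn => f.injective (Subtype.ext hmn)
  obtain ⟨n, hn⟩ := Felgner.exists_setOf_ringFormulaSat_ne φ _ _ he hlim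
  exact hn (f n).2.choose_spec.2
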